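/- arXiv:1805.02604 — 6 statements merged into one kernel-verified Lean document; each statement's English description precedes it below -/
import Mathlib

section
/- Let Ω ⊂ ℝ^N be open and bounded, let F : ℝ × ℝ^N → ℝ be of class C³, let u : ℝ^N → ℝ be bounded and of class C³ with bounded derivatives, and let η : ℝ^N → ℝ^N be bounded and of class C³ with bounded derivatives. Set Z := (η·∇)η and, for x ∈ Ω and t ∈ ℝ, let M_t(x) be the N×N matrix with entries (M_t(x))_{ij} := δ_{ij} + t ∂η^i/∂x_j(x) + (t²/2) ∂Z^i/∂x_j(x). For |t| small enough M_t(x) is invertible for all x ∈ Ω; define 𝔄(t) := ∫_Ω F(u(x), q_t(x)) · det M_t(x) dx, where q_t(x) ∈ ℝ^N has j-th component Σ_i ∂u/∂x_i(x) (M_t(x)⁻¹)_{ij}. Then 𝔄 is differentiable at t = 0 with 𝔄'(0) = ∫_Ω { F(u, ∇u) · div η − Σ_j F_{p_j}(u, ∇u) · (∇u·∇η)_j } dx, where (∇u·∇η)_j := Σ_i ∂u/∂x_i ∂η^i/∂x_j. -/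
open Filter MeasureTheory Topology
open scoped RealInnerProductSpace

namespace PaperAC

/-- The partial derivative `∂f/∂x_j` of a scalar function on `ℝ^N`. -/
noncomputable def pdv {N : ℕ} (f : (Fin N → ℝ) → ℝ) (j : Fin N) (x : Fin N → ℝ) : ℝ :=
  fderiv ℝ f x (Pi.single j 1)

/-- The advection field `(η·∇)η`, with components `((η·∇)η)^i = ∑_j η^j ∂η^i/∂x_j`. -/
noncomputable def advf {N : ℕ} (η : (Fin N → ℝ) → (Fin N → ℝ)) (x : Fin N → ℝ) :
    Fin N → ℝ :=
  fun i => ∑ j, η x j * pdv (fun z => η z i) j x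

/-- The gradient `∇u` of a scalar function on `ℝ^N`. -/
noncomputable def grad {N : ℕ} (u : (Fin N → ℝ) → ℝ) (x : Fin N → ℝ) : Fin N → ℝ :=
  fun i => pdv u i x

/-- `X₀ := (D²u·η, η) + (∇u, 2(η·∇)η − ζ)`. -/
noncomputable def X0 {N : ℕ} (u : (Fin N → ℝ) → ℝ) (η ζ : (Fin N → ℝ) → (Fin N → ℝ))
    (y : Fin N → ℝ) : ℝ :=
  (∑ i, ∑ j, pdv (pdv u i) j y * η y i * η y j)
    + ∑ i, pdv u i y * (2 * advf η y i - ζ y i)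

/-- `−∇u·η`. -/
noncomputable def nGradDot {N : ℕ} (u : (Fin N → ℝ) → ℝ) (η : (Fin N → ℝ) → (Fin N → ℝ))
    (x : Fin N → ℝ) : ℝ :=
  -(∑ i, pdv u i x * η x i)

/-- `F_z`, the partial derivative of `F = F(z,p)` in the scalar variable. -/
noncomputable def Fz {N : ℕ} (F : ℝ × (Fin N → ℝ) → ℝ) (z : ℝ) (p : Fin N → ℝ) : ℝ :=
  fderiv ℝ F (z, p) (1, 0)

/-- `F_{p_i}`. -/
noncomputable def Fp {N : ℕ} (F : ℝ × (Fin N → ℝ) → ℝ) (i : Fin N) (z : ℝ) (p : Fin N → ℝ) :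
    ℝ :=
  fderiv ℝ F (z, p) (0, Pi.single i 1)

/-- `F_{zz}`. -/
noncomputable def Fzz {N : ℕ} (F : ℝ × (Fin N → ℝ) → ℝ) (z : ℝ) (p : Fin N → ℝ) : ℝ :=
  fderiv ℝ (fun q => fderiv ℝ F q (1, 0)) (z, p) (1, 0)

/-- `F_{z p_i}`. -/
noncomputable def Fzp {N : ℕ} (F : ℝ × (Fin N → ℝ) → ℝ) (i : Fin N) (z : ℝ) (p : Fin N → ℝ) :
    ℝ :=
  fderiv ℝ (fun q => fderiv ℝ F q ((0 : ℝ), Pi.single i 1)) (z, p) (1, 0)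

/-- `F_{p_i p_j}`. -/
noncomputable def Fpp {N : ℕ} (F : ℝ × (Fin N → ℝ) → ℝ) (i j : Fin N) (z : ℝ)
    (p : Fin N → ℝ) : ℝ :=
  fderiv ℝ (fun q => fderiv ℝ F q ((0 : ℝ), Pi.single j 1)) (z, p) ((0 : ℝ), Pi.single i 1)

/-- `𝔄₁(t) = A(u ∘ Φ_t⁻¹) = ∫_Ω F(u_t, ∇u_t)`, the inner deformation of the functional
`A(w) := ∫_Ω F(w, ∇w)`. -/
noncomputable def innerA {N : ℕ} (Ω : Set (Fin N → ℝ)) (F : ℝ × (Fin N → ℝ) → ℝ)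
    (u : (Fin N → ℝ) → ℝ) (Φ : ℝ → (Fin N → ℝ) → (Fin N → ℝ)) (t : ℝ) : ℝ :=
  ∫ y in Ω, F (u (Function.invFun (Φ t) y),
      grad (fun z => u (Function.invFun (Φ t) z)) y)

/-- `t ↦ A(u + tφ) = ∫_Ω F(u + tφ, ∇u + t∇φ)`, the outer deformation of the functional
`A(w) := ∫_Ω F(w, ∇w)`. -/
noncomputable def gateauxA {N : ℕ} (Ω : Set (Fin N → ℝ)) (F : ℝ × (Fin N → ℝ) → ℝ)
    (u φ : (Fin N → ℝ) → ℝ) (t : ℝ) : ℝ :=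
  ∫ x in Ω, F (u x + t * φ x, fun i => pdv u i x + t * pdv φ i x)

/-- The matrix `M_t(x)` with entries `δ_{ij} + t ∂η^i/∂x_j + (t²/2) ∂W^i/∂x_j`. -/
noncomputable def defMat {N : ℕ} (η W : (Fin N → ℝ) → (Fin N → ℝ)) (t : ℝ)
    (x : Fin N → ℝ) : Matrix (Fin N) (Fin N) ℝ :=
  Matrix.of fun i j =>
    (if i = j then (1 : ℝ) else 0) + t * pdv (fun z => η z i) j x
      + (t ^ 2 / 2) * pdv (fun z => W z i) j x

/-- `Φ(a) := ∫_0^a |s² − 1| ds`. -/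
noncomputable def PhiAC (a : ℝ) : ℝ := ∫ s in (0 : ℝ)..a, |s ^ 2 - 1|

/-- All partial derivatives (= iterated Fréchet derivatives) of `f` up to order `n` are
bounded; the case `i = 0` says `f` itself is bounded. -/
def BddUpTo {N : ℕ} {E : Type*} [NormedAddCommGroup E] [NormedSpace ℝ E]
    (n : ℕ) (f : (Fin N → ℝ) → E) : Prop :=
  ∀ i : ℕ, i ≤ n → ∃ C : ℝ, ∀ x, ‖iteratedFDeriv ℝ i f x‖ ≤ C



/-- Parameter space. -/
abbrev EP (N : ℕ) := ℝ × (Fin N → ℝ) × (Fin N → Fin N → ℝ) × (Fin N → Fin N → ℝ)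

/-- Abstract matrix. -/
noncomputable def MM {N : ℕ} (q : ℝ × EP N) : Matrix (Fin N) (Fin N) ℝ :=
  Matrix.of fun i j =>
    (if i = j then (1 : ℝ) else 0) + q.1 * q.2.2.2.1 i j + (q.1 ^ 2 / 2) * q.2.2.2.2 i j

/-- Abstract integrand. -/
noncomputable def GG {N : ℕ} (F : ℝ × (Fin N → ℝ) → ℝ) (q : ℝ × EP N) : ℝ :=
  F (q.2.1, fun j => ∑ i, q.2.2.1 i * (MM q)⁻¹ i j) * (MM q).det

lemma contDiff_det' {N : ℕ} {X : Type*} [NormedAddCommGroup X] [NormedSpace ℝ X] {n : WithTop ℕ∞}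
    (f : X → Matrix (Fin N) (Fin N) ℝ)
    (hf : ∀ i j, ContDiff ℝ n (fun x => f x i j)) :
    ContDiff ℝ n (fun x => (f x).det) := by
  simp only [Matrix.det_apply]
  refine ContDiff.sum fun σ _ => ?_
  refine ContDiff.const_smul _ ?_
  exact contDiff_prod fun i _ => hf _ _

lemma contDiff_MM {N : ℕ} {n : WithTop ℕ∞} (i j : Fin N) :
    ContDiff ℝ n (fun q : ℝ × EP N => MM q i j) := by
  simp only [MM, Matrix.of_apply]
  have h1 : ContDiff ℝ n (fun q : ℝ × EP N => q.2.2.2.1 i j) := by fun_prop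
  have h2 : ContDiff ℝ n (fun q : ℝ × EP N => q.2.2.2.2 i j) := by fun_prop
  fun_prop

lemma contDiffAt_inv {N : ℕ} {n : WithTop ℕ∞} (q : ℝ × EP N) (hq : (MM q).det ≠ 0)
    (i j : Fin N) : ContDiffAt ℝ n (fun q : ℝ × EP N => (MM q)⁻¹ i j) q := by
  have : (fun q : ℝ × EP N => (MM q)⁻¹ i j) =
      fun q => ((MM q).det)⁻¹ * ((MM q).updateRow j (Pi.single i 1)).det := by
    funext q
    rw [Matrix.inv_def, Matrix.smul_apply, Matrix.adjugate_apply, Ring.inverse_eq_inv', smul_eq_mul]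
  rw [this]
  refine ContDiffAt.mul (ContDiffAt.inv (contDiff_det' _ contDiff_MM).contDiffAt hq) ?_
  refine (contDiff_det' _ fun a b => ?_).contDiffAt
  by_cases h : a = j
  · subst h
    simpa [Matrix.updateRow_self] using contDiff_const
  · simpa [Matrix.updateRow_ne h] using contDiff_MM a b

lemma contDiffAt_GG {N : ℕ} (F : ℝ × (Fin N → ℝ) → ℝ) (hF : ContDiff ℝ 3 F)
    (q : ℝ × EP N) (hq : (MM q).det ≠ 0) : ContDiffAt ℝ 1 (GG F) q := by
  unfold GG
  refine ContDiffAt.mul ?_ (contDiff_det' _ contDiff_MM).contDiffAt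
  refine ContDiffAt.comp q (hF.of_le (by norm_num)).contDiffAt ?_
  refine ContDiffAt.prodMk (by fun_prop) ?_
  refine contDiffAt_pi.2 fun j => ?_
  refine ContDiffAt.sum fun i _ => ?_
  refine ContDiffAt.mul ?_ (contDiffAt_inv q hq i j)
  fun_prop

lemma MM_zero {N : ℕ} (c : EP N) : MM ((0 : ℝ), c) = 1 := by
  ext i j
  simp [MM, Matrix.one_apply]

lemma hasDerivAt_MM {N : ℕ} (c : EP N) (i j : Fin N) :
    HasDerivAt (fun t : ℝ => MM (t, c) i j) (c.2.2.1 i j) 0 := by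
  simp only [MM, Matrix.of_apply]
  have h1 := (hasDerivAt_id (0 : ℝ)).mul_const (c.2.2.1 i j)
  have h2 := (((hasDerivAt_id (0 : ℝ)).pow 2).div_const 2).mul_const (c.2.2.2 i j)
  have h3 := (h1.const_add (if i = j then (1 : ℝ) else 0)).fun_add h2
  simpa using h3

lemma hasDerivAt_det {N : ℕ} (c : EP N) :
    HasDerivAt (fun t : ℝ => (MM (t, c)).det) (∑ i, c.2.2.1 i i) 0 := by
  have hD : ContDiff ℝ 1 (fun m : Fin N → Fin N → ℝ => (Matrix.of m).det) :=
    contDiff_det' _ fun i j => by simp only [Matrix.of_apply]; fun_prop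
  let I : Fin N → Fin N → ℝ := fun i j => (1 : Matrix (Fin N) (Fin N) ℝ) i j
  have hd := (hD.differentiable one_ne_zero I).hasFDerivAt
  have key : ∀ γ : ℝ → Fin N → Fin N → ℝ, γ 0 = I → HasDerivAt γ c.2.2.1 0 →
      HasDerivAt (fun t => (Matrix.of (γ t)).det)
        (fderiv ℝ (fun m : Fin N → Fin N → ℝ => (Matrix.of m).det) I c.2.2.1) 0 := by
    intro γ h0 hγ
    rw [← h0] at hd ⊢
    exact hd.comp_hasDerivAt (0 : ℝ) hγ
  have k1 := key (fun t i j => MM (t, c) i j) (by simp only [MM_zero]; rfl)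
    (hasDerivAt_pi.2 fun i => hasDerivAt_pi.2 fun j => hasDerivAt_MM c i j)
  have k2 := key (fun t i j => (1 + t • Matrix.of c.2.2.1 : Matrix (Fin N) (Fin N) ℝ) i j)
    (by funext i j; simp [I]) (hasDerivAt_pi.2 fun i => hasDerivAt_pi.2 fun j => by
      simpa using ((hasDerivAt_id (0 : ℝ)).mul_const (c.2.2.1 i j)).const_add
        ((1 : Matrix (Fin N) (Fin N) ℝ) i j))
  have k3 : HasDerivAt (fun t : ℝ => (1 + t • Matrix.of c.2.2.1 : Matrix (Fin N) (Fin N) ℝ).det)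
      (∑ i, c.2.2.1 i i) 0 := by
    rw [funext fun t : ℝ => Matrix.det_one_add_smul t (Matrix.of c.2.2.1)]
    set P := (Matrix.det (1 + (Polynomial.X : Polynomial ℝ) •
      (Matrix.of c.2.2.1).map Polynomial.C)).divX.divX
    have h1 := ((hasDerivAt_id (0 : ℝ)).const_mul (Matrix.of c.2.2.1).trace).const_add 1
    have h2 := (P.hasDerivAt 0).fun_mul ((hasDerivAt_id (0 : ℝ)).pow 2)
    simpa [Matrix.trace] using h1.fun_add h2
  have e := k2.unique k3
  rw [e] at k1
  exact k1

lemma hasDerivAt_inv' {N : ℕ} (c : EP N) (i j : Fin N) :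
    HasDerivAt (fun t : ℝ => (MM (t, c))⁻¹ i j) (-c.2.2.1 i j) 0 := by
  have h0 : (MM ((0 : ℝ), c)).det ≠ 0 := by rw [MM_zero]; simp
  have hdiff : ∀ k l, HasDerivAt (fun t : ℝ => (MM (t, c))⁻¹ k l)
      (deriv (fun t : ℝ => (MM (t, c))⁻¹ k l) 0) 0 := fun k l => by
    refine DifferentiableAt.hasDerivAt ?_
    have h1 := (contDiffAt_inv (n := 1) ((0 : ℝ), c) h0 k l).differentiableAt one_ne_zero
    have h2 : DifferentiableAt ℝ (fun t : ℝ => (t, c)) 0 := by fun_prop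
    exact DifferentiableAt.comp (0 : ℝ) h1 h2
  have hprod : HasDerivAt (fun t : ℝ => ∑ k, MM (t, c) i k * (MM (t, c))⁻¹ k j)
      (∑ k, (c.2.2.1 i k * (MM ((0 : ℝ), c))⁻¹ k j
        + MM ((0 : ℝ), c) i k * deriv (fun t : ℝ => (MM (t, c))⁻¹ k j) 0)) 0 :=
    HasDerivAt.fun_sum fun k _ => (hasDerivAt_MM c i k).mul (hdiff k j)
  have hev : (fun t : ℝ => ∑ k, MM (t, c) i k * (MM (t, c))⁻¹ k j) =ᶠ[𝓝 0]
      fun _ => (1 : Matrix (Fin N) (Fin N) ℝ) i j := by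
    have : ∀ᶠ t in 𝓝 (0 : ℝ), (MM (t, c)).det ≠ 0 :=
      (hasDerivAt_det c).continuousAt.eventually_ne h0
    filter_upwards [this] with t ht
    rw [← Matrix.mul_apply, Matrix.mul_nonsing_inv _ (isUnit_iff_ne_zero.2 ht)]
  have hc := hprod.unique ((hasDerivAt_const (0 : ℝ) _).congr_of_eventuallyEq hev)
  simp only [MM_zero, inv_one, Finset.sum_add_distrib, Matrix.one_apply, mul_ite, mul_one,
    mul_zero, ite_mul, one_mul, zero_mul, Finset.sum_ite_eq, Finset.sum_ite_eq',
    Finset.mem_univ, if_true] at hc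
  have := hdiff i j
  rwa [eq_neg_of_add_eq_zero_right hc] at this

lemma hasDerivAt_GG {N : ℕ} (F : ℝ × (Fin N → ℝ) → ℝ) (hF : ContDiff ℝ 3 F) (c : EP N) :
    HasDerivAt (fun t : ℝ => GG F (t, c))
      (F (c.1, c.2.1) * (∑ i, c.2.2.1 i i)
        - ∑ j, Fp F j c.1 c.2.1 * ∑ i, c.2.1 i * c.2.2.1 i j) 0 := by
  have hq : HasDerivAt (fun t : ℝ => (c.1, fun j => ∑ i, c.2.1 i * (MM (t, c))⁻¹ i j))
      ((0 : ℝ), fun j => ∑ i, c.2.1 i * (-c.2.2.1 i j)) 0 :=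
    (hasDerivAt_const _ _).prodMk (hasDerivAt_pi.2 fun j => HasDerivAt.fun_sum fun i _ =>
      (hasDerivAt_inv' c i j).const_mul _)
  have hp0 : (fun j => ∑ i, c.2.1 i * (MM ((0 : ℝ), c))⁻¹ i j) = c.2.1 := by
    funext j
    simp [MM_zero, Matrix.one_apply]
  have hFd : HasFDerivAt F (fderiv ℝ F (c.1, c.2.1))
      (c.1, fun j => ∑ i, c.2.1 i * (MM ((0 : ℝ), c))⁻¹ i j) := by
    rw [hp0]
    exact (hF.differentiable (by norm_num) _).hasFDerivAt
  have h1 := (hFd.comp_hasDerivAt (0 : ℝ) hq).mul (hasDerivAt_det c)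
  refine h1.congr_deriv ?_
  simp only [Function.comp]
  rw [hp0]
  simp only [MM_zero, Matrix.det_one, mul_one]
  have : ((0 : ℝ), fun j => ∑ i, c.2.1 i * (-c.2.2.1 i j)) =
      ∑ j, (-∑ i, c.2.1 i * c.2.2.1 i j) • ((0 : ℝ), (Pi.single j 1 : Fin N → ℝ)) := by
    refine Prod.ext ?_ ?_
    · simp [Prod.fst_sum]
    · funext k
      simp [Prod.snd_sum, Finset.sum_apply, Pi.single_apply]
  rw [this, map_sum]
  simp only [map_smul, smul_eq_mul, neg_mul, Finset.sum_neg_distrib, Fp]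
  rw [sub_eq_neg_add]
  congr 2
  exact Finset.sum_congr rfl fun j _ => mul_comm _ _

lemma contDiff_pdv {N : ℕ} {f : (Fin N → ℝ) → ℝ} {m n : WithTop ℕ∞} (hf : ContDiff ℝ n f)
    (h : m + 1 ≤ n) (j : Fin N) : ContDiff ℝ m (pdv f j) := by
  unfold pdv
  exact (hf.fderiv_right h).clm_apply contDiff_const

/-- The parameters as a function of the point. -/
noncomputable def cc {N : ℕ} (u : (Fin N → ℝ) → ℝ) (η : (Fin N → ℝ) → (Fin N → ℝ))
    (x : Fin N → ℝ) : EP N :=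
  (u x, grad u x, fun i j => pdv (fun z => η z i) j x, fun i j => pdv (fun z => advf η z i) j x)

lemma continuous_cc {N : ℕ} (u : (Fin N → ℝ) → ℝ) (hu : ContDiff ℝ 3 u)
    (η : (Fin N → ℝ) → (Fin N → ℝ)) (hη : ContDiff ℝ 3 η) : Continuous (cc u η) := by
  have hηi : ∀ i, ContDiff ℝ 3 (fun z => η z i) := contDiff_pi.1 hη
  have hd : ∀ i j, ContDiff ℝ 2 (pdv (fun z => η z i) j) := fun i j =>
    contDiff_pdv (hηi i) (by norm_num) j
  have ha : ∀ i, ContDiff ℝ 2 (fun z => advf η z i) := fun i => by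
    unfold advf
    exact ContDiff.sum fun j _ => ((hηi j).of_le (by norm_num)).mul (hd i j)
  refine hu.continuous.prodMk (Continuous.prodMk ?_ (Continuous.prodMk ?_ ?_))
  · exact continuous_pi fun i => (contDiff_pdv (m := 2) hu (by norm_num) i).continuous
  · exact continuous_pi fun i => continuous_pi fun j => (hd i j).continuous
  · exact continuous_pi fun i => continuous_pi fun j =>
      (contDiff_pdv (m := 1) (ha i) (by norm_num) j).continuous

lemma exists_tube {N : ℕ} (Ω : Set (Fin N → ℝ)) (hΩb : Bornology.IsBounded Ω)
    (c : (Fin N → ℝ) → EP N) (hc : Continuous c) :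
    ∃ τ > (0 : ℝ), ∀ t ∈ Metric.closedBall (0 : ℝ) τ, ∀ x ∈ closure Ω,
      (MM (t, c x)).det ≠ 0 := by
  have hK : IsCompact (closure Ω) := hΩb.isCompact_closure
  have hcont : Continuous (fun p : ℝ × (Fin N → ℝ) => (MM (p.1, c p.2)).det) :=
    (contDiff_det' (n := 1) _ contDiff_MM).continuous.comp
      (continuous_fst.prodMk (hc.comp continuous_snd))
  have hopen : IsOpen {p : ℝ × (Fin N → ℝ) | (MM (p.1, c p.2)).det ≠ 0} :=
    isOpen_ne_fun hcont continuous_const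
  obtain ⟨U, V, hU, hV, h0, hKV, hUV⟩ := generalized_tube_lemma (isCompact_singleton (x := (0 : ℝ)))
    hK hopen (by
      rintro ⟨t, x⟩ ⟨ht, -⟩
      simp only [Set.mem_singleton_iff] at ht
      subst ht
      simp [MM_zero])
  obtain ⟨ε, hε, hball⟩ := Metric.nhds_basis_closedBall.mem_iff.1
    (hU.mem_nhds (h0 (Set.mem_singleton _)))
  exact ⟨ε, hε, fun t ht x hx => hUV (Set.mk_mem_prod (hball ht) (hKV hx))⟩

/-- First inner variation via change of variables: with `Z := (η·∇)η`,
`M_t(x) := I + t∇η + (t²/2)∇Z` and `𝔄(t) := ∫_Ω F(u, ∇u·M_t⁻¹) det M_t`, the matrices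
`M_t(x)` are invertible on `Ω` for small `|t|` and `𝔄` is differentiable at `t = 0` with
`𝔄'(0) = ∫_Ω {F div η − (∇_p F, ∇u·∇η)}`. -/
theorem first_inner_variation_change_of_variables
    (N : ℕ) (Ω : Set (Fin N → ℝ)) (hΩo : IsOpen Ω) (hΩb : Bornology.IsBounded Ω)
    (F : ℝ × (Fin N → ℝ) → ℝ) (hF : ContDiff ℝ 3 F)
    (u : (Fin N → ℝ) → ℝ) (hu : ContDiff ℝ 3 u) (hub : BddUpTo 3 u)
    (η : (Fin N → ℝ) → (Fin N → ℝ))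
    (hη : ContDiff ℝ 3 η) (hηb : BddUpTo 3 η) :
    ∃ τ > (0 : ℝ),
      (∀ t : ℝ, |t| < τ → ∀ x ∈ Ω, IsUnit (defMat η (advf η) t x)) ∧
      HasDerivAt
        (fun t : ℝ => ∫ x in Ω,
          F (u x, fun j => ∑ i, pdv u i x * (defMat η (advf η) t x)⁻¹ i j)
            * (defMat η (advf η) t x).det)
        (∫ x in Ω,
          (F (u x, grad u x) * (∑ i, pdv (fun z => η z i) i x)
            - ∑ j, Fp F j (u x) (grad u x)
                * (∑ i, pdv u i x * pdv (fun z => η z i) j x))) 0 := by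
  have hc := continuous_cc u hu η hη
  obtain ⟨τ, hτ, hne⟩ := exists_tube Ω hΩb (cc u η) hc
  have hmat : ∀ t x, defMat η (advf η) t x = MM (t, cc u η x) := fun t x => rfl
  have hK : IsCompact (closure Ω) := hΩb.isCompact_closure
  have hbb : Metric.ball (0 : ℝ) τ ⊆ Metric.closedBall (0 : ℝ) τ := Metric.ball_subset_closedBall
  refine ⟨τ, hτ, fun t ht x hx => ?_, ?_⟩
  · rw [Matrix.isUnit_iff_isUnit_det, isUnit_iff_ne_zero, hmat]
    exact hne t (by simpa using ht.le) x (subset_closure hx)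
  let G' : ℝ → (Fin N → ℝ) → ℝ := fun t x => fderiv ℝ (GG F) (t, cc u η x) (1, 0)
  have hG'cont : ContinuousOn (fun p : ℝ × (Fin N → ℝ) => G' p.1 p.2)
      (Metric.closedBall (0 : ℝ) τ ×ˢ closure Ω) := by
    rintro ⟨t, x⟩ ⟨ht, hx⟩
    refine ContinuousAt.continuousWithinAt ?_
    have h1 : ContinuousAt (fderiv ℝ (GG F)) (t, cc u η x) :=
      (contDiffAt_GG F hF _ (hne t ht x hx)).continuousAt_fderiv one_ne_zero
    have h2 : Continuous (fun p : ℝ × (Fin N → ℝ) => (p.1, cc u η p.2)) :=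
      continuous_fst.prodMk (hc.comp continuous_snd)
    have h3 : ContinuousAt (fun p : ℝ × (Fin N → ℝ) => fderiv ℝ (GG F) (p.1, cc u η p.2)) (t, x) :=
      ContinuousAt.comp (f := fun p : ℝ × (Fin N → ℝ) => (p.1, cc u η p.2)) h1 h2.continuousAt
    exact h3.clm_apply continuousAt_const
  have hGcont : ∀ t ∈ Metric.closedBall (0 : ℝ) τ,
      ContinuousOn (fun x => GG F (t, cc u η x)) (closure Ω) := by
    intro t ht x hx
    refine ContinuousAt.continuousWithinAt ?_
    exact ContinuousAt.comp (f := fun x => (t, cc u η x))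
      (contDiffAt_GG F hF _ (hne t ht x hx)).continuousAt
      (continuous_const.prodMk hc).continuousAt
  have hder : ∀ t ∈ Metric.closedBall (0 : ℝ) τ, ∀ x ∈ closure Ω,
      HasDerivAt (fun t => GG F (t, cc u η x)) (G' t x) t := by
    intro t ht x hx
    have h1 := ((contDiffAt_GG F hF _ (hne t ht x hx)).differentiableAt one_ne_zero).hasFDerivAt
    have h2 : HasDerivAt (fun s : ℝ => (s, cc u η x)) ((1 : ℝ), (0 : EP N)) t :=
      (hasDerivAt_id t).prodMk (hasDerivAt_const t _)
    exact HasFDerivAt.comp_hasDerivAt (f := fun s : ℝ => (s, cc u η x)) t h1 h2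
  obtain ⟨C, hC⟩ := ((isCompact_closedBall (0 : ℝ) τ).prod hK).exists_bound_of_continuousOn hG'cont
  have h00 : (0 : ℝ) ∈ Metric.closedBall (0 : ℝ) τ := Metric.mem_closedBall_self hτ.le
  have hfin : volume Ω ≠ ⊤ := hΩb.measure_lt_top.ne
  have hmain := hasDerivAt_integral_of_dominated_loc_of_deriv_le (μ := volume.restrict Ω)
    (F := fun t x => GG F (t, cc u η x)) (F' := G') (x₀ := (0 : ℝ)) (bound := fun _ => C)
    (Metric.ball_mem_nhds (0 : ℝ) hτ)
    (by
      filter_upwards [Metric.ball_mem_nhds (0 : ℝ) hτ] with t ht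
      exact ((hGcont t (hbb ht)).mono subset_closure).aestronglyMeasurable hΩo.measurableSet)
    (((hGcont 0 h00).integrableOn_compact hK).mono_set subset_closure)
    (by
      refine ContinuousOn.aestronglyMeasurable ?_ hΩo.measurableSet
      exact hG'cont.comp (f := fun x => ((0 : ℝ), x)) (by fun_prop)
        fun x hx => ⟨h00, subset_closure hx⟩)
    (by
      filter_upwards [ae_restrict_mem hΩo.measurableSet] with x hx t ht
      exact hC (t, x) ⟨hbb ht, subset_closure hx⟩)
    (integrableOn_const hfin)
    (by
      filter_upwards [ae_restrict_mem hΩo.measurableSet] with x hx t ht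
      exact hder t (hbb ht) x (subset_closure hx))
  refine hmain.2.congr_deriv ?_
  refine setIntegral_congr_fun hΩo.measurableSet fun x hx => ?_
  exact (hder 0 h00 x (subset_closure hx)).unique (hasDerivAt_GG F hF (cc u η x))


end PaperAC
end

section
/- Let Ω ⊂ ℝ^N be open and let m ≥ 1. Let (λ_n) and λ be finite Borel measures on Ω, and let ρ_n, ρ : Ω → ℝ^m be Borel measurable with |ρ_n(x)| = 1 for λ_n-a.e. x and |ρ(x)| = 1 for λ-a.e. x. Assume: (i) for every continuous compactly supported φ : Ω → ℝ^m, ∫_Ω φ(x)·ρ_n(x) dλ_n(x) → ∫_Ω φ(x)·ρ(x) dλ(x) as n → ∞; and (ii) λ_n(Ω) → λ(Ω). Then for every bounded continuous function f : Ω × S^{m−1} → ℝ, where S^{m−1} := {p ∈ ℝ^m : |p| = 1}, one has ∫_Ω f(x, ρ_n(x)) dλ_n(x) → ∫_Ω f(x, ρ(x)) dλ(x). -/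
open Filter MeasureTheory Topology
open scoped RealInnerProductSpace

namespace PaperAC

section Helpers

lemma approx_aux {a : ℕ → ℝ} {a0 : ℝ} (h : ∀ ε > 0, ∃ (u : ℕ → ℝ) (u0 : ℝ) (b : ℕ → ℝ) (b0 : ℝ),
    Tendsto u atTop (𝓝 u0) ∧ Tendsto b atTop (𝓝 b0) ∧ b0 ≤ ε ∧ (∀ n, |a n - u n| ≤ b n) ∧
    |a0 - u0| ≤ b0) : Tendsto a atTop (𝓝 a0) := by
  rw [Metric.tendsto_atTop']
  intro ε hε
  obtain ⟨u, u0, b, b0, hu, hb, hb0, h1, h2⟩ := h (ε / 4) (by linarith)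
  have e1 := hu.eventually (Metric.ball_mem_nhds u0 (show 0 < ε / 4 by linarith))
  have e2 := hb.eventually (Metric.ball_mem_nhds b0 (show 0 < ε / 4 by linarith))
  obtain ⟨n0, hn0⟩ := eventually_atTop.1 (e1.and e2)
  refine ⟨n0, fun n hn => ?_⟩
  obtain ⟨h3, h4⟩ := hn0 n hn.le
  have h5 := h1 n
  rw [Real.dist_eq, abs_lt] at *
  rw [abs_le] at *
  constructor <;> linarith [h5.1, h5.2, h2.1, h2.2, h3.1, h3.2, h4.1, h4.2]

variable {X : Type*} [MetricSpace X] [MeasurableSpace X] [BorelSpace X]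
  {E : Type*} [NormedAddCommGroup E] [InnerProductSpace ℝ E] [FiniteDimensional ℝ E]
  [MeasurableSpace E] [BorelSpace E]

lemma exists_phi [LocallyCompactSpace X] [SecondCountableTopology X] (μ : Measure X)
    [IsFiniteMeasure μ] [μ.Regular] (ρ : X → E)
    (hρm : Measurable ρ) (hρ : ∀ᵐ x ∂μ, ‖ρ x‖ = 1) {ε : ℝ} (hε : 0 < ε) :
    ∃ φ : X → E, Continuous φ ∧ HasCompactSupport φ ∧ (∀ x, ‖φ x‖ ≤ 1) ∧
      ∫ x, (1 - ⟪φ x, ρ x⟫) ∂μ ≤ ε := by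
  have hint : Integrable ρ μ := Integrable.of_bound hρm.aestronglyMeasurable 1
    (hρ.mono fun x hx => hx.le)
  obtain ⟨g, hgs, hgi, hgc, hgint⟩ := hint.exists_hasCompactSupport_integral_sub_le
    (show 0 < ε / 2 by linarith)
  have hpos : ∀ x, 0 < max 1 ‖g x‖ := fun x => lt_max_of_lt_left one_pos
  have hφc : Continuous fun x => (max 1 ‖g x‖)⁻¹ • g x :=
    ((continuous_const.max hgc.norm).inv₀ fun x => (hpos x).ne').smul hgc
  have hφ1 : ∀ x, ‖(max 1 ‖g x‖)⁻¹ • g x‖ ≤ 1 := fun x => by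
    rw [norm_smul, norm_inv, Real.norm_of_nonneg (hpos x).le, inv_mul_le_iff₀ (hpos x), mul_one]
    exact le_max_right _ _
  refine ⟨fun x => (max 1 ‖g x‖)⁻¹ • g x, hφc, hgs.smul_left, hφ1, ?_⟩
  have key : ∀ᵐ x ∂μ, 1 - ⟪(max 1 ‖g x‖)⁻¹ • g x, ρ x⟫ ≤ 2 * ‖ρ x - g x‖ := by
    filter_upwards [hρ] with x hx
    set φ := (max 1 ‖g x‖)⁻¹ • g x with hφ
    have h1 : 1 - ⟪φ, ρ x⟫ = ⟪ρ x - φ, ρ x⟫ := by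
      rw [inner_sub_left, real_inner_self_eq_norm_sq, hx]; norm_num
    have h2 : ⟪ρ x - φ, ρ x⟫ ≤ ‖ρ x - φ‖ := by
      simpa [hx] using real_inner_le_norm (ρ x - φ) (ρ x)
    have h3 : ‖g x - φ‖ ≤ ‖ρ x - g x‖ := by
      have : g x - φ = (1 - (max 1 ‖g x‖)⁻¹) • g x := by rw [hφ, sub_smul, one_smul]
      rw [this, norm_smul]
      rcases le_total ‖g x‖ 1 with h | h
      · simp [max_eq_left h]
      · rw [max_eq_right h]
        have h0 : 0 < ‖g x‖ := by linarith
        have : (0:ℝ) ≤ 1 - ‖g x‖⁻¹ := by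
          have := inv_le_one_of_one_le₀ h
          linarith
        rw [Real.norm_of_nonneg this, sub_mul, inv_mul_cancel₀ h0.ne', one_mul]
        have := norm_sub_norm_le (g x) (ρ x)
        rw [norm_sub_rev, hx] at this
        exact this
    have h4 : ‖ρ x - φ‖ ≤ ‖ρ x - g x‖ + ‖g x - φ‖ := norm_sub_le_norm_sub_add_norm_sub _ _ _
    linarith
  have hi : Integrable (fun x => 1 - ⟪(max 1 ‖g x‖)⁻¹ • g x, ρ x⟫) μ := by
    refine Integrable.of_bound (C := 2) ?_ ?_
    · exact (measurable_const.sub (hφc.measurable.inner hρm)).aestronglyMeasurable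
    · filter_upwards [hρ] with x hx
      have := abs_real_inner_le_norm ((max 1 ‖g x‖)⁻¹ • g x) (ρ x)
      rw [hx, mul_one] at this
      have := abs_le.1 (this.trans (hφ1 x))
      rw [Real.norm_eq_abs, abs_le]
      constructor <;> linarith [this.1, this.2]
  have := integral_mono_ae hi ((hint.sub hgint).norm.const_mul 2) key
  rw [integral_const_mul] at this
  simp only [Pi.sub_apply] at this
  linarith

lemma int_inner (μ : Measure X) [IsFiniteMeasure μ] (ρ : X → E) (hρm : Measurable ρ)
    (hρ : ∀ᵐ x ∂μ, ‖ρ x‖ = 1) (φ : X → E) (hφ : Measurable φ) (C : ℝ) (hC : ∀ x, ‖φ x‖ ≤ C) :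
    Integrable (fun x => ⟪φ x, ρ x⟫) μ := by
  refine Integrable.of_bound (C := C) (hφ.inner hρm).aestronglyMeasurable ?_
  filter_upwards [hρ] with x hx
  have := abs_real_inner_le_norm (φ x) (ρ x)
  rw [hx, mul_one] at this
  exact this.trans (hC x)

/-- one-measure estimate for the weak convergence -/
lemma est1 (μ : Measure X) [IsFiniteMeasure μ] (ρ : X → E) (hρm : Measurable ρ)
    (hρ : ∀ᵐ x ∂μ, ‖ρ x‖ = 1) (φ : X → E) (hφ : Continuous φ) (h1 : ∀ x, ‖φ x‖ ≤ 1)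
    (g : X → ℝ) (hg : Continuous g) (C : ℝ) (hC : ∀ x, |g x| ≤ C) :
    |∫ x, g x ∂μ - ∫ x, ⟪g x • φ x, ρ x⟫ ∂μ| ≤ C * ∫ x, (1 - ⟪φ x, ρ x⟫) ∂μ := by
  have i1 : Integrable g μ := Integrable.of_bound hg.measurable.aestronglyMeasurable C
    (Eventually.of_forall hC)
  have i2 : Integrable (fun x => ⟪g x • φ x, ρ x⟫) μ := by
    refine int_inner μ ρ hρm hρ _ (hg.smul hφ).measurable C fun x => ?_
    rw [norm_smul]
    have := mul_le_mul (hC x) (h1 x) (norm_nonneg _) ((abs_nonneg _).trans (hC x))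
    simpa using this
  have i3 := int_inner μ ρ hρm hρ φ hφ.measurable 1 h1
  rw [← integral_sub i1 i2, ← integral_const_mul, ← Real.norm_eq_abs]
  refine norm_integral_le_of_norm_le (((integrable_const 1).sub i3).const_mul C) ?_
  filter_upwards [hρ] with x hx
  have h2 := real_inner_le_norm (φ x) (ρ x)
  rw [hx, mul_one] at h2
  have h3 : 0 ≤ 1 - ⟪φ x, ρ x⟫ := by linarith [h1 x]
  rw [real_inner_smul_left, Real.norm_eq_abs,
    show g x - g x * ⟪φ x, ρ x⟫ = g x * (1 - ⟪φ x, ρ x⟫) by ring, abs_mul, abs_of_nonneg h3]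
  exact mul_le_mul_of_nonneg_right (hC x) h3

/-- one-measure estimate for the main step -/
lemma est2 (μ : Measure X) [IsFiniteMeasure μ] (ρ : X → E) (hρm : Measurable ρ)
    (hρ : ∀ᵐ x ∂μ, ‖ρ x‖ = 1) (φ ψ : X → E) (hφ : Continuous φ) (h1 : ∀ x, ‖φ x‖ ≤ 1)
    (hψ : Continuous ψ) (hψ1 : ∀ x, ‖ψ x‖ ≤ 1)
    (F : X × E → ℝ) (hF : Measurable F) (C : ℝ) (hC : ∀ x p, ‖p‖ ≤ 1 → |F (x, p)| ≤ C)
    (η A B : ℝ) (hA : 0 ≤ A) (hB : 0 ≤ B)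
    (hb : ∀ x p q, ‖p‖ ≤ 1 → ‖q‖ ≤ 1 →
      |F (x, p) - F (x, q)| ≤ η + A * ‖p - q‖ ^ 2 + B * (1 - ‖ψ x‖)) :
    |∫ x, F (x, ρ x) ∂μ - ∫ x, F (x, φ x) ∂μ| ≤
      η * μ.real Set.univ + 2 * A * ∫ x, (1 - ⟪φ x, ρ x⟫) ∂μ + B * ∫ x, (1 - ⟪ψ x, ρ x⟫) ∂μ := by
  have i1 : Integrable (fun x => F (x, ρ x)) μ := by
    refine Integrable.of_bound (hF.comp (measurable_id.prodMk hρm)).aestronglyMeasurable C ?_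
    filter_upwards [hρ] with x hx
    exact hC _ _ hx.le
  have i2 : Integrable (fun x => F (x, φ x)) μ :=
    Integrable.of_bound (hF.comp (measurable_id.prodMk hφ.measurable)).aestronglyMeasurable C
      (Eventually.of_forall fun x => hC _ _ (h1 x))
  have i3 : Integrable (fun x => 1 - ⟪φ x, ρ x⟫) μ :=
    (integrable_const (μ := μ) (1 : ℝ)).sub (int_inner μ ρ hρm hρ φ hφ.measurable 1 h1)
  have i4 : Integrable (fun x => 1 - ⟪ψ x, ρ x⟫) μ :=
    (integrable_const (μ := μ) (1 : ℝ)).sub (int_inner μ ρ hρm hρ ψ hψ.measurable 1 hψ1)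
  have i5 : Integrable (fun x => η + 2 * A * (1 - ⟪φ x, ρ x⟫)) μ :=
    (integrable_const _).add (i3.const_mul _)
  have e : η * μ.real Set.univ + 2 * A * ∫ x, (1 - ⟪φ x, ρ x⟫) ∂μ + B * ∫ x, (1 - ⟪ψ x, ρ x⟫) ∂μ
      = ∫ x, (η + 2 * A * (1 - ⟪φ x, ρ x⟫) + B * (1 - ⟪ψ x, ρ x⟫)) ∂μ := by
    rw [integral_add i5 (i4.const_mul _),
      integral_add (integrable_const _) (i3.const_mul _), integral_const_mul, integral_const_mul,
      integral_const, smul_eq_mul, mul_comm η]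
  rw [e, ← integral_sub i1 i2, ← Real.norm_eq_abs]
  refine norm_integral_le_of_norm_le
    (i5.add (i4.const_mul _)) ?_
  filter_upwards [hρ] with x hx
  refine (hb x (ρ x) (φ x) hx.le (h1 x)).trans ?_
  have h2 := real_inner_le_norm (ψ x) (ρ x)
  rw [hx, mul_one] at h2
  have h3 : ‖ρ x - φ x‖ ^ 2 ≤ 2 * (1 - ⟪φ x, ρ x⟫) := by
    rw [norm_sub_sq_real, hx, real_inner_comm]
    have := pow_le_one₀ (norm_nonneg _) (h1 x) (n := 2)
    linarith
  have h4 := mul_le_mul_of_nonneg_left h3 hA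
  have h5 : B * (1 - ‖ψ x‖) ≤ B * (1 - ⟪ψ x, ρ x⟫) := mul_le_mul_of_nonneg_left (by linarith) hB
  linarith

theorem general [LocallyCompactSpace X] [SecondCountableTopology X]
    (μ : ℕ → Measure X) (μ0 : Measure X) [∀ n, IsFiniteMeasure (μ n)] [IsFiniteMeasure μ0]
    [μ0.Regular] (ρ : ℕ → X → E) (ρ0 : X → E)
    (hρm : ∀ n, Measurable (ρ n)) (hρ0m : Measurable ρ0)
    (hρ1 : ∀ n, ∀ᵐ x ∂(μ n), ‖ρ n x‖ = 1) (hρ01 : ∀ᵐ x ∂μ0, ‖ρ0 x‖ = 1)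
    (hweak : ∀ φ : X → E, Continuous φ → HasCompactSupport φ →
      Tendsto (fun n => ∫ x, ⟪φ x, ρ n x⟫ ∂(μ n)) atTop (𝓝 (∫ x, ⟪φ x, ρ0 x⟫ ∂μ0)))
    (hmass : Tendsto (fun n => (μ n).real Set.univ) atTop (𝓝 (μ0.real Set.univ)))
    (F : X × E → ℝ) (hF : Continuous F) (C : ℝ) (hC0 : 0 ≤ C)
    (hC : ∀ x p, ‖p‖ ≤ 1 → |F (x, p)| ≤ C) :
    Tendsto (fun n => ∫ x, F (x, ρ n x) ∂(μ n)) atTop (𝓝 (∫ x, F (x, ρ0 x) ∂μ0)) := by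
  have hdef : ∀ φ : X → E, Continuous φ → HasCompactSupport φ → (∀ x, ‖φ x‖ ≤ 1) →
      Tendsto (fun n => ∫ x, (1 - ⟪φ x, ρ n x⟫) ∂(μ n)) atTop
        (𝓝 (∫ x, (1 - ⟪φ x, ρ0 x⟫) ∂μ0)) := by
    intro φ hφ hφs hφ1
    have e : ∀ (ν : Measure X) [IsFiniteMeasure ν] (σ : X → E), Measurable σ →
        (∀ᵐ x ∂ν, ‖σ x‖ = 1) →
        ∫ x, (1 - ⟪φ x, σ x⟫) ∂ν = ν.real Set.univ - ∫ x, ⟪φ x, σ x⟫ ∂ν := by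
      intro ν _ σ hσ hσ1
      rw [integral_sub (integrable_const _) (int_inner ν σ hσ hσ1 φ hφ.measurable 1 hφ1)]
      simp
    rw [e μ0 ρ0 hρ0m hρ01]
    simp_rw [fun n => e (μ n) (ρ n) (hρm n) (hρ1 n)]
    exact hmass.sub (hweak φ hφ hφs)
  have hw : ∀ g : X → ℝ, Continuous g → (∀ x, |g x| ≤ C) →
      Tendsto (fun n => ∫ x, g x ∂(μ n)) atTop (𝓝 (∫ x, g x ∂μ0)) := by
    intro g hg hgC
    refine approx_aux fun ε hε => ?_
    obtain ⟨φ, hφ, hφs, hφ1, hφi⟩ := exists_phi μ0 ρ0 hρ0m hρ01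
      (show 0 < ε / (C + 1) by positivity)
    refine ⟨_, _, _, _, hweak (fun x => g x • φ x) (hg.smul hφ) hφs.smul_left,
      (hdef φ hφ hφs hφ1).const_mul C, ?_, fun n => ?_, ?_⟩
    · calc _ ≤ C * (ε / (C + 1)) := mul_le_mul_of_nonneg_left hφi hC0
        _ ≤ (C + 1) * (ε / (C + 1)) := by gcongr; linarith
        _ = ε := by field_simp
    · exact est1 (μ n) (ρ n) (hρm n) (hρ1 n) φ hφ hφ1 g hg C hgC
    · exact est1 μ0 ρ0 hρ0m hρ01 φ hφ hφ1 g hg C hgC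
  refine approx_aux fun ε hε => ?_
  set M := μ0.real Set.univ with hM
  have hM0 : 0 ≤ M := measureReal_nonneg
  obtain ⟨ψ, hψ, hψs, hψ1, hψi⟩ := exists_phi μ0 ρ0 hρ0m hρ01
      (show 0 < ε / (3 * (2 * C + 1)) by positivity)
  have hK : IsCompact (tsupport ψ ×ˢ Metric.closedBall (0 : E) 1) :=
    hψs.prod (isCompact_closedBall 0 1)
  have hu := hK.uniformContinuousOn_of_continuous hF.continuousOn
  rw [Metric.uniformContinuousOn_iff] at hu
  obtain ⟨δ, hδ, hu⟩ := hu (ε / (3 * (M + 1))) (by positivity)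
  set A := 2 * C / δ ^ 2 with hA
  have hA0 : 0 ≤ A := by positivity
  obtain ⟨φ, hφ, hφs, hφ1, hφi⟩ := exists_phi μ0 ρ0 hρ0m hρ01
      (show 0 < ε / (3 * (2 * A + 1)) by positivity)
  have hb : ∀ x p q, ‖p‖ ≤ 1 → ‖q‖ ≤ 1 →
      |F (x, p) - F (x, q)| ≤
        ε / (3 * (M + 1)) + A * ‖p - q‖ ^ 2 + 2 * C * (1 - ‖ψ x‖) := by
    intro x p q hp hq
    have hη : 0 ≤ ε / (3 * (M + 1)) := by positivity
    have t1 : 0 ≤ A * ‖p - q‖ ^ 2 := by positivity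
    have t2 : 0 ≤ 2 * C * (1 - ‖ψ x‖) := mul_nonneg (by linarith) (by linarith [hψ1 x])
    have t3 : |F (x, p) - F (x, q)| ≤ 2 * C := by
      have := abs_sub (F (x, p)) (F (x, q))
      linarith [hC x p hp, hC x q hq]
    by_cases hx : x ∈ tsupport ψ
    · by_cases hpq : ‖p - q‖ < δ
      · have := hu (x, p) ⟨hx, by simpa using hp⟩ (x, q) ⟨hx, by simpa using hq⟩ (by
          rw [Prod.dist_eq]; simpa [dist_eq_norm, hδ] using hpq)
        rw [Real.dist_eq] at this
        linarith
      · push Not at hpq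
        have : 2 * C ≤ A * ‖p - q‖ ^ 2 := by
          calc 2 * C = A * δ ^ 2 := by rw [hA]; field_simp
            _ ≤ _ := by gcongr
        linarith
    · rw [image_eq_zero_of_notMem_tsupport hx, norm_zero] at *
      linarith
  have hFφ : Continuous fun x => F (x, φ x) := hF.comp (continuous_id.prodMk hφ)
  refine ⟨_, _, _, _, hw (fun x => F (x, φ x)) hFφ (fun x => hC _ _ (hφ1 x)),
    ((hmass.const_mul (ε / (3 * (M + 1)))).add ((hdef φ hφ hφs hφ1).const_mul (2 * A))).add
      ((hdef ψ hψ hψs hψ1).const_mul (2 * C)), ?_, fun n => ?_, ?_⟩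
  · have a1 : ε / (3 * (M + 1)) * M ≤ ε / 3 := by
      calc _ ≤ ε / (3 * (M + 1)) * (M + 1) := by gcongr; linarith
        _ = ε / 3 := by field_simp
    have a2 : 2 * A * ∫ x, (1 - ⟪φ x, ρ0 x⟫) ∂μ0 ≤ ε / 3 := by
      calc _ ≤ 2 * A * (ε / (3 * (2 * A + 1))) := by gcongr
        _ ≤ (2 * A + 1) * (ε / (3 * (2 * A + 1))) := by gcongr; linarith
        _ = ε / 3 := by field_simp
    have a3 : 2 * C * ∫ x, (1 - ⟪ψ x, ρ0 x⟫) ∂μ0 ≤ ε / 3 := by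
      calc _ ≤ 2 * C * (ε / (3 * (2 * C + 1))) := by gcongr
        _ ≤ (2 * C + 1) * (ε / (3 * (2 * C + 1))) := by gcongr; linarith
        _ = ε / 3 := by field_simp
    linarith
  · exact est2 (μ n) (ρ n) (hρm n) (hρ1 n) φ ψ hφ hφ1 hψ hψ1 F hF.measurable C hC _ A _ hA0
      (by linarith) hb
  · exact est2 μ0 ρ0 hρ0m hρ01 φ ψ hφ hφ1 hψ hψ1 F hF.measurable C hC _ A _ hA0
      (by linarith) hb

lemma homog_cont (f : X × E → ℝ) (Y : Set X)
    (hf : ContinuousOn f (Y ×ˢ Metric.sphere (0 : E) 1)) (C : ℝ)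
    (hC : ∀ p ∈ Y ×ˢ Metric.sphere (0 : E) 1, |f p| ≤ C) :
    Continuous fun z : Y × E => ‖z.2‖ * f (z.1, ‖z.2‖⁻¹ • z.2) := by
  have hs : ∀ p : E, p ≠ 0 → ‖p‖⁻¹ • p ∈ Metric.sphere (0 : E) 1 := fun p hp => by
    rw [mem_sphere_zero_iff_norm, norm_smul, norm_inv, norm_norm,
      inv_mul_cancel₀ (norm_ne_zero_iff.2 hp)]
  rw [continuous_iff_continuousAt]
  rintro ⟨x, p⟩
  by_cases hp : p = 0
  · subst hp
    have h0 : Tendsto (fun z : Y × E => C * ‖z.2‖) (𝓝 (x, 0)) (𝓝 0) := by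
      have : Continuous fun z : Y × E => C * ‖z.2‖ := by fun_prop
      simpa using this.tendsto (x, 0)
    unfold ContinuousAt
    simp only [norm_zero, zero_mul]
    refine squeeze_zero_norm (fun z => ?_) h0
    by_cases hz : z.2 = 0
    · simp [hz]
    · rw [norm_mul, norm_norm, mul_comm]
      exact mul_le_mul_of_nonneg_right (hC _ ⟨z.1.2, hs _ hz⟩) (norm_nonneg _)
  · have ho : IsOpen {z : Y × E | z.2 ≠ 0} := isOpen_ne_fun continuous_snd continuous_const
    refine ContinuousOn.continuousAt ?_ (ho.mem_nhds hp)
    refine continuous_snd.norm.continuousOn.mul ?_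
    refine hf.comp (ContinuousOn.prodMk (by fun_prop) ?_) fun z hz => ⟨z.1.2, hs _ hz⟩
    exact (continuous_snd.norm.continuousOn.inv₀ fun z hz => norm_ne_zero_iff.2 hz).smul
      continuous_snd.continuousOn

end Helpers

/-- Reshetnyak's continuity theorem, in polar-decomposition form: if the
vector measures `ρₙ·λₙ` converge weakly to `ρ·λ` (tested against continuous compactly
supported fields) and the total masses `λₙ(Ω)` converge to `λ(Ω)`, then
`∫_Ω f(x, ρₙ(x)) dλₙ → ∫_Ω f(x, ρ(x)) dλ` for every bounded continuous
`f : Ω × S^{m−1} → ℝ`. -/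
theorem reshetnyak_continuity
    (N m : ℕ) (hm : 1 ≤ m)
    (Ω : Set (EuclideanSpace ℝ (Fin N))) (hΩ : IsOpen Ω)
    (lam : ℕ → Measure (EuclideanSpace ℝ (Fin N)))
    (lam0 : Measure (EuclideanSpace ℝ (Fin N)))
    [∀ n, IsFiniteMeasure (lam n)] [IsFiniteMeasure lam0]
    (ρ : ℕ → EuclideanSpace ℝ (Fin N) → EuclideanSpace ℝ (Fin m))
    (ρ0 : EuclideanSpace ℝ (Fin N) → EuclideanSpace ℝ (Fin m))
    (hρm : ∀ n, Measurable (ρ n)) (hρ0m : Measurable ρ0)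
    (hρ1 : ∀ n, ∀ᵐ x ∂((lam n).restrict Ω), ‖ρ n x‖ = 1)
    (hρ01 : ∀ᵐ x ∂(lam0.restrict Ω), ‖ρ0 x‖ = 1)
    (hweak : ∀ φ : EuclideanSpace ℝ (Fin N) → EuclideanSpace ℝ (Fin m),
      Continuous φ → HasCompactSupport φ → tsupport φ ⊆ Ω →
      Tendsto (fun n => ∫ x in Ω, (∑ i, φ x i * ρ n x i) ∂(lam n)) atTop
        (𝓝 (∫ x in Ω, (∑ i, φ x i * ρ0 x i) ∂lam0)))
    (hmass : Tendsto (fun n => (lam n Ω).toReal) atTop (𝓝 ((lam0 Ω).toReal)))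
    (f : EuclideanSpace ℝ (Fin N) × EuclideanSpace ℝ (Fin m) → ℝ)
    (hf : ContinuousOn f (Ω ×ˢ Metric.sphere (0 : EuclideanSpace ℝ (Fin m)) 1))
    (hfb : ∃ C : ℝ, ∀ p ∈ Ω ×ˢ Metric.sphere (0 : EuclideanSpace ℝ (Fin m)) 1,
      |f p| ≤ C) :
    Tendsto (fun n => ∫ x in Ω, f (x, ρ n x) ∂(lam n)) atTop
      (𝓝 (∫ x in Ω, f (x, ρ0 x) ∂lam0)) := by
  obtain ⟨C, hC⟩ := hfb
  have hm' := hΩ.measurableSet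
  have hlc : LocallyCompactSpace Ω := hΩ.locallyCompactSpace
  have hemb := MeasurableEmbedding.subtype_coe hm'
  have hfin : ∀ ν : Measure (EuclideanSpace ℝ (Fin N)), [IsFiniteMeasure ν] →
      IsFiniteMeasure (ν.comap (Subtype.val : Ω → _)) := fun ν _ =>
    ⟨by rw [hemb.comap_apply]; exact measure_lt_top _ _⟩
  have := fun n => hfin (lam n)
  have := hfin lam0
  have hae : ∀ (ν : Measure (EuclideanSpace ℝ (Fin N)))
      (σ : EuclideanSpace ℝ (Fin N) → EuclideanSpace ℝ (Fin m)),
      (∀ᵐ x ∂(ν.restrict Ω), ‖σ x‖ = 1) →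
      ∀ᵐ x : Ω ∂(ν.comap (Subtype.val : Ω → _)), ‖σ x‖ = 1 := by
    intro ν σ h
    rw [← map_comap_subtype_coe hm'] at h
    exact hemb.ae_map_iff.1 h
  have hreal : ∀ ν : Measure (EuclideanSpace ℝ (Fin N)),
      (ν.comap (Subtype.val : Ω → _)).real Set.univ = (ν Ω).toReal := by
    intro ν
    rw [Measure.real, hemb.comap_apply]; simp
  have key := general (fun n => (lam n).comap (Subtype.val : Ω → _))
    (lam0.comap (Subtype.val : Ω → _)) (fun n x => ρ n x) (fun x => ρ0 x)
    (fun n => (hρm n).comp measurable_subtype_coe) (hρ0m.comp measurable_subtype_coe)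
    (fun n => hae _ _ (hρ1 n)) (hae _ _ hρ01) ?_ ?_
    (fun z : Ω × EuclideanSpace ℝ (Fin m) => ‖z.2‖ * f (z.1, ‖z.2‖⁻¹ • z.2))
    (homog_cont f Ω hf C hC) |C| (abs_nonneg C) ?_
  · have e : ∀ (ν : Measure (EuclideanSpace ℝ (Fin N)))
        (σ : EuclideanSpace ℝ (Fin N) → EuclideanSpace ℝ (Fin m)),
        (∀ᵐ x ∂(ν.restrict Ω), ‖σ x‖ = 1) →
        ∫ x : Ω, ‖σ x‖ * f (x, ‖σ x‖⁻¹ • σ x) ∂(ν.comap (Subtype.val : Ω → _)) =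
        ∫ x in Ω, f (x, σ x) ∂ν := by
      intro ν σ h
      rw [integral_subtype_comap hm' (fun x => ‖σ x‖ * f (x, ‖σ x‖⁻¹ • σ x))]
      refine integral_congr_ae ?_
      filter_upwards [h] with x hx
      simp [hx]
    rw [← e _ _ hρ01]
    simp_rw [← fun n => e _ _ (hρ1 n)]
    exact key
  · intro φ hφ hφs
    have := hweak _ (hφs.continuous_extend_zero hΩ hφ) (hφs.extend_zero continuous_subtype_val)
      ((hφs.tsupport_extend_zero_subset continuous_subtype_val).trans
        (Subtype.coe_image_subset _ _))
    have e : ∀ (ν : Measure (EuclideanSpace ℝ (Fin N)))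
        (σ : EuclideanSpace ℝ (Fin N) → EuclideanSpace ℝ (Fin m)),
        ∫ x in Ω, (∑ i, (Subtype.val.extend φ 0 : EuclideanSpace ℝ (Fin N) → _) x i * σ x i) ∂ν =
        ∫ x : Ω, ⟪φ x, σ x⟫ ∂(ν.comap (Subtype.val : Ω → _)) := by
      intro ν σ
      rw [← integral_subtype_comap hm']
      refine integral_congr_ae (Eventually.of_forall fun x => ?_)
      simp [PiLp.inner_apply, mul_comm]
    simp_rw [e] at this
    exact this
  · simp_rw [hreal]
    exact hmass
  · intro x p hp
    rw [abs_mul, abs_norm]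
    by_cases h0 : p = 0
    · simp [h0]
    · have h1 := hC (x.1, ‖p‖⁻¹ • p) ⟨x.2, by
        rw [mem_sphere_zero_iff_norm, norm_smul, norm_inv, norm_norm,
          inv_mul_cancel₀ (norm_ne_zero_iff.2 h0)]⟩
      calc _ ≤ 1 * |C| := mul_le_mul hp (h1.trans (le_abs_self C)) (abs_nonneg _) zero_le_one
        _ = |C| := one_mul _

end PaperAC
end

section
/- Let Ω ⊂ ℝ^N be open and bounded, let (ε_k) be a sequence of positive numbers with ε_k → 0, and let u_k : ℝ^N → ℝ be of class C¹. Set p_k(x) := |u_k(x)² − 1| ∇u_k(x). Let λ be a finite Borel measure on Ω and ρ : Ω → ℝ^N Borel measurable with |ρ(x)| = 1 for λ-a.e. x. Assume: (i) for every continuous compactly supported φ : Ω → ℝ^N, ∫_Ω φ·p_k dx → ∫_Ω φ·ρ dλ; (ii) ∫_Ω |p_k| dx → λ(Ω); and (iii) ∫_Ω | ε_k|∇u_k|² − |p_k| | dx → 0. Then for every bounded continuous φ : Ω → ℝ and all indices i, j ∈ {1, …, N}, ∫_Ω ε_k ∂u_k/∂x_i ∂u_k/∂x_j φ dx → ∫_Ω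 ρ_i ρ_j φ dλ as k → ∞. -/
open Filter MeasureTheory Topology
open scoped RealInnerProductSpace

namespace PaperAC

theorem aux_unit {N : ℕ} (v g : Fin N → ℝ) (hv : ∑ l, v l ^ 2 = 1) (hg : ∑ l, g l ^ 2 ≤ 1)
    (i j : Fin N) (η : ℝ) (hη : 0 < η) :
    |v i * v j - (∑ l, g l * v l) * (g i * g j)| ≤ η + (2 / η + 1) * (1 - ∑ l, g l * v l) := by
  set s := ∑ l, g l * v l with hs
  have hd : ∑ l, (v l - g l) ^ 2 ≤ 2 * (1 - s) := by
    have : ∑ l, (v l - g l) ^ 2 = ∑ l, v l ^ 2 + ∑ l, g l ^ 2 - 2 * s := by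
      rw [hs, Finset.mul_sum, ← Finset.sum_add_distrib, ← Finset.sum_sub_distrib]
      exact Finset.sum_congr rfl fun l _ => by ring
    linarith
  have hdi : ∀ l, (v l - g l) ^ 2 ≤ 2 * (1 - s) := fun l =>
    (Finset.single_le_sum (f := fun l => (v l - g l) ^ 2) (fun l _ => sq_nonneg _)
      (Finset.mem_univ l)).trans hd
  have ht : 0 ≤ 1 - s := by nlinarith [hdi i, sq_nonneg (v i - g i)]
  have hv1 : ∀ l, |v l| ≤ 1 := fun l => by
    have := (Finset.single_le_sum (f := fun l => (v l) ^ 2) (fun l _ => sq_nonneg _)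
      (Finset.mem_univ l)).trans hv.le
    rwa [sq_le_one_iff_abs_le_one] at this
  have hg1 : ∀ l, |g l| ≤ 1 := fun l => by
    have := (Finset.single_le_sum (f := fun l => (g l) ^ 2) (fun l _ => sq_nonneg _)
      (Finset.mem_univ l)).trans hg
    rwa [sq_le_one_iff_abs_le_one] at this
  have hab : ∀ l, |v l - g l| ≤ η / 2 + (1 - s) / η := fun l => by
    have h1 : |v l - g l| ^ 2 ≤ 2 * (1 - s) := by rw [sq_abs]; exact hdi l
    have h2 : 0 ≤ (|v l - g l| - η) ^ 2 := sq_nonneg _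
    have : |v l - g l| * η ≤ (η / 2 + (1 - s) / η) * η := by
      have : (η / 2 + (1 - s) / η) * η = η ^ 2 / 2 + (1 - s) := by field_simp
      rw [this]; nlinarith
    exact le_of_mul_le_mul_right this hη
  have e : v i * v j - s * (g i * g j) =
      v i * (v j - g j) + g j * (v i - g i) + (1 - s) * (g i * g j) := by ring
  rw [e]
  have a1 : |v i * (v j - g j)| ≤ η / 2 + (1 - s) / η := by
    rw [abs_mul]
    exact (mul_le_of_le_one_left (abs_nonneg _) (hv1 i)).trans (hab j)
  have a2 : |g j * (v i - g i)| ≤ η / 2 + (1 - s) / η := by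
    rw [abs_mul]
    exact (mul_le_of_le_one_left (abs_nonneg _) (hg1 j)).trans (hab i)
  have a3 : |(1 - s) * (g i * g j)| ≤ 1 - s := by
    rw [abs_mul, abs_mul, abs_of_nonneg ht]
    exact mul_le_of_le_one_right ht (mul_le_one₀ (hg1 i) (abs_nonneg _) (hg1 j))
  have := abs_add_three (v i * (v j - g j)) (g j * (v i - g i)) ((1 - s) * (g i * g j))
  have e2 : (2 / η + 1) * (1 - s) = 2 * ((1 - s) / η) + (1 - s) := by ring
  linarith

theorem aux_point {N : ℕ} (q g : Fin N → ℝ) (hg : ∑ l, g l ^ 2 ≤ 1) (e a : ℝ) (ha : 0 ≤ a)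
    (i j : Fin N) (η : ℝ) (hη : 0 < η) :
    |e * q i * q j - (∑ l, g l * (a * q l)) * (g i * g j)| ≤
      |e * (∑ l, q l ^ 2) - Real.sqrt (∑ l, (a * q l) ^ 2)| + η * Real.sqrt (∑ l, (a * q l) ^ 2)
      + (2 / η + 1) * (Real.sqrt (∑ l, (a * q l) ^ 2) - ∑ l, g l * (a * q l)) := by
  have hR : Real.sqrt (∑ l, (a * q l) ^ 2) = a * Real.sqrt (∑ l, q l ^ 2) := by
    simp_rw [mul_pow]
    rw [← Finset.mul_sum, Real.sqrt_mul (sq_nonneg _), Real.sqrt_sq ha]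
  rw [hR]
  have hS0 : 0 ≤ ∑ l, q l ^ 2 := Finset.sum_nonneg fun l _ => sq_nonneg _
  set r := Real.sqrt (∑ l, q l ^ 2) with hr
  have hrr : ∑ l, q l ^ 2 = r ^ 2 := (Real.sq_sqrt hS0).symm
  rcases (Real.sqrt_nonneg (∑ l, q l ^ 2)).eq_or_lt with h0 | h0
  · rw [← hr] at h0
    have hq : ∀ l, q l = 0 := by
      rw [← h0] at hrr
      have := (Finset.sum_eq_zero_iff_of_nonneg (fun l _ => sq_nonneg (q l))).1 (hrr.trans (by simp))
      intro l
      simpa using this l (Finset.mem_univ l)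
    simp [hq, ← h0]
  rw [← hr] at h0
  have hv : ∑ l, (q l / r) ^ 2 = 1 := by
    simp_rw [div_pow]; rw [← Finset.sum_div, hrr, div_self (by positivity)]
  have key := aux_unit (fun l => q l / r) g hv hg i j η hη
  have hsum : ∑ l, g l * (q l / r) = (∑ l, g l * q l) / r := by
    rw [Finset.sum_div]; exact Finset.sum_congr rfl fun l _ => by ring
  have hsum2 : ∑ l, g l * (a * q l) = a * ∑ l, g l * q l := by
    rw [Finset.mul_sum]; exact Finset.sum_congr rfl fun l _ => by ring
  simp only [hsum] at key
  rw [hsum2, hrr]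
  set s := ∑ l, g l * q l
  have hvi : ∀ l, |q l / r| ≤ 1 := fun l => by
    have := (Finset.single_le_sum (f := fun l => (q l / r) ^ 2) (fun l _ => sq_nonneg _)
      (Finset.mem_univ l)).trans hv.le
    rwa [sq_le_one_iff_abs_le_one] at this
  have e1 : e * q i * q j - a * s * (g i * g j) =
      (e * r ^ 2 - a * r) * (q i / r * (q j / r))
        + (a * r) * (q i / r * (q j / r) - s / r * (g i * g j)) := by
    field_simp; ring
  rw [e1]
  refine (abs_add_le _ _).trans ?_
  have b1 : |(e * r ^ 2 - a * r) * (q i / r * (q j / r))| ≤ |e * r ^ 2 - a * r| := by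
    rw [abs_mul, abs_mul]
    exact mul_le_of_le_one_right (abs_nonneg _) (mul_le_one₀ (hvi i) (abs_nonneg _) (hvi j))
  have b2 : |(a * r) * (q i / r * (q j / r) - s / r * (g i * g j))| ≤
      (a * r) * (η + (2 / η + 1) * (1 - s / r)) := by
    rw [abs_mul, abs_of_nonneg (by positivity : 0 ≤ a * r)]
    exact mul_le_mul_of_nonneg_left key (by positivity)
  have e3 : (a * r) * (η + (2 / η + 1) * (1 - s / r)) =
      η * (a * r) + (2 / η + 1) * (a * r - a * s) := by
    field_simp
  linarith

theorem aux_proj {E : Type*} [NormedAddCommGroup E] [InnerProductSpace ℝ E] (r h : E)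
    (hr : ‖r‖ = 1) : 1 - inner ℝ ((max 1 ‖h‖)⁻¹ • h) r ≤ 2 * ‖r - h‖ := by
  set m := max 1 ‖h‖ with hm
  have hm1 : 1 ≤ m := le_max_left _ _
  have h1 : ‖h - m⁻¹ • h‖ ≤ ‖r - h‖ := by
    have : h - m⁻¹ • h = (1 - m⁻¹) • h := by rw [sub_smul, one_smul]
    rw [this, norm_smul, Real.norm_of_nonneg (by have := inv_le_one_of_one_le₀ hm1; linarith)]
    rcases le_total ‖h‖ 1 with hh | hh
    · rw [hm, max_eq_left hh]; simp
    · rw [hm, max_eq_right hh, sub_mul, inv_mul_cancel₀ (by positivity)]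
      have := norm_sub_norm_le h r
      rw [norm_sub_rev] at this
      linarith
  have h2 : ‖r - m⁻¹ • h‖ ≤ 2 * ‖r - h‖ := by
    have := norm_add_le (r - h) (h - m⁻¹ • h)
    rw [sub_add_sub_cancel] at this
    linarith
  have h3 : 1 - inner ℝ (m⁻¹ • h) r = inner ℝ (r - m⁻¹ • h) r := by
    rw [inner_sub_left, real_inner_self_eq_norm_sq, hr]; norm_num
  rw [h3]
  have := real_inner_le_norm (r - m⁻¹ • h) r
  rw [hr, mul_one] at this
  linarith

theorem aux_norm_proj {E : Type*} [NormedAddCommGroup E] [InnerProductSpace ℝ E] (h : E) :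
    ‖(max 1 ‖h‖)⁻¹ • h‖ ≤ 1 := by
  have hm1 : 1 ≤ max 1 ‖h‖ := le_max_left _ _
  rw [norm_smul, norm_inv, Real.norm_of_nonneg (by linarith), ← div_eq_inv_mul]
  exact div_le_one_of_le₀ (le_max_right _ _) (by linarith)

theorem aux_approx {N : ℕ} (Ω : Set (Fin N → ℝ)) (hΩo : IsOpen Ω)
    (lam0 : Measure (Fin N → ℝ)) [IsFiniteMeasure lam0]
    (ρ : (Fin N → ℝ) → (Fin N → ℝ)) (hρm : Measurable ρ)
    (hρ1 : ∀ᵐ x ∂(lam0.restrict Ω), Real.sqrt (∑ i, ρ x i ^ 2) = 1) (δ : ℝ) (hδ : 0 < δ) :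
    ∃ g : (Fin N → ℝ) → (Fin N → ℝ), Continuous g ∧ HasCompactSupport g ∧ tsupport g ⊆ Ω ∧
      (∀ x, ∑ l, g x l ^ 2 ≤ 1) ∧ ∫ x in Ω, (1 - ∑ l, g x l * ρ x l) ∂lam0 ≤ δ := by
  let R : (Fin N → ℝ) → EuclideanSpace ℝ (Fin N) := fun x => WithLp.toLp 2 (ρ x)
  have hRm : Measurable R := by fun_prop
  have hR1 : ∀ᵐ x ∂(lam0.restrict Ω), ‖R x‖ = 1 := by
    filter_upwards [hρ1] with x hx
    rw [EuclideanSpace.norm_eq]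
    simpa [R] using hx
  have hRi : Integrable R (lam0.restrict Ω) :=
    Integrable.of_bound hRm.aestronglyMeasurable 1 (hR1.mono fun x hx => hx.le)
  obtain ⟨h, -, hh, hc, hi⟩ := hRi.exists_hasCompactSupport_integral_sub_le
    (ε := δ / 4) (by positivity)
  obtain ⟨K, hKΩ, hK, hKm⟩ := hΩo.measurableSet.exists_isCompact_sdiff_lt
    (measure_ne_top lam0 Ω) (ε := ENNReal.ofReal (δ / 2)) (by simpa using hδ)
  obtain ⟨χ, hχ1, hχc, hχΩ, hχ⟩ := exists_continuousMap_one_of_isCompact_subset_isOpen hK hΩo hKΩ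
  let P : (Fin N → ℝ) → EuclideanSpace ℝ (Fin N) := fun x => (max 1 ‖h x‖)⁻¹ • h x
  have hPc : Continuous P := by
    refine Continuous.smul (Continuous.inv₀ (continuous_const.max hc.norm) fun x => ?_) hc
    have : 1 ≤ max 1 ‖h x‖ := le_max_left _ _
    positivity
  have hPc' : ∀ l, Continuous fun x => P x l := fun l => by fun_prop
  have hP2 : ∀ x, ∑ l, P x l ^ 2 ≤ 1 := fun x => by
    have h1 := aux_norm_proj (h x)
    have h2 := EuclideanSpace.norm_sq_eq (P x)
    simp only [Real.norm_eq_abs, sq_abs] at h2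
    rw [← h2]
    exact pow_le_one₀ (norm_nonneg _) h1
  let g : (Fin N → ℝ) → (Fin N → ℝ) := fun x l => χ x * P x l
  have hgc : Continuous g := by
    refine continuous_pi fun l => ?_
    exact χ.continuous.mul (hPc' l)
  have hsupp : Function.support g ⊆ Function.support χ := by
    intro x hx hx0
    apply hx
    funext l
    simp [g, hx0]
  have hgP : ∀ x, ∑ l, g x l * ρ x l = χ x * inner ℝ (P x) (R x) := fun x => by
    simp only [g, R, PiLp.inner_apply, Finset.mul_sum]
    refine Finset.sum_congr rfl fun l _ => ?_
    simp; ring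
  refine ⟨g, hgc, HasCompactSupport.mono (f := χ) hχc hsupp, (closure_mono hsupp).trans hχΩ, fun x => ?_, ?_⟩
  · have : ∑ l, g x l ^ 2 = χ x ^ 2 * ∑ l, P x l ^ 2 := by
      rw [Finset.mul_sum]; exact Finset.sum_congr rfl fun l _ => by simp only [g]; ring
    rw [this]
    exact mul_le_one₀ (pow_le_one₀ (hχ x).1 (hχ x).2)
      (Finset.sum_nonneg fun l _ => sq_nonneg _) (hP2 x)
  · have hle : ∀ᵐ x ∂(lam0.restrict Ω), 1 - ∑ l, g x l * ρ x l ≤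
        2 * ‖R x - h x‖ + Set.indicator (Ω \ K) (fun _ => (1:ℝ)) x := by
      filter_upwards [hR1, ae_restrict_mem hΩo.measurableSet] with x hx hxΩ
      rw [hgP]
      have h1 := aux_proj (R x) (h x) hx
      have h2 : |inner ℝ (P x) (R x)| ≤ 1 := by
        refine (abs_real_inner_le_norm _ _).trans ?_
        rw [hx, mul_one]; exact aux_norm_proj (h x)
      change 1 - inner ℝ (P x) (R x) ≤ _ at h1
      by_cases hxK : x ∈ K
      · rw [hχ1 hxK, Set.indicator_of_notMem (by simp [hxK])]
        simpa using h1
      · rw [Set.indicator_of_mem (show x ∈ Ω \ K from ⟨hxΩ, hxK⟩)]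
        have h3 := abs_le.1 h2
        have := (hχ x).1
        have := (hχ x).2
        nlinarith
    have hmK : MeasurableSet (Ω \ K) := hΩo.measurableSet.diff hK.measurableSet
    have hI1 : Integrable (fun x => 2 * ‖R x - h x‖) (lam0.restrict Ω) :=
      ((hRi.sub hi).norm).const_mul 2
    have hI2 : Integrable (Set.indicator (Ω \ K) (fun _ => (1:ℝ))) (lam0.restrict Ω) :=
      (integrable_const 1).indicator hmK
    have hI0 : Integrable (fun x => 1 - ∑ l, g x l * ρ x l) (lam0.restrict Ω) := by
      refine Integrable.of_bound (C := 2) ?_ ?_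
      · have : ∀ l, Measurable fun x => g x l := fun l => 
          ((continuous_apply l).comp hgc).measurable
        exact (by fun_prop : Measurable (fun x => 1 - ∑ l, g x l * ρ x l)).aestronglyMeasurable
      · filter_upwards [hR1] with x hx
        rw [hgP]
        have h2 : |inner ℝ (P x) (R x)| ≤ 1 := by
          refine (abs_real_inner_le_norm _ _).trans ?_
          rw [hx, mul_one]; exact aux_norm_proj (h x)
        have h3 : |χ x * inner ℝ (P x) (R x)| ≤ 1 := by
          rw [abs_mul, abs_of_nonneg (hχ x).1]
          exact mul_le_one₀ (hχ x).2 (abs_nonneg _) h2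
        rw [Real.norm_eq_abs, abs_le]
        have := abs_le.1 h3
        constructor <;> linarith
    refine (integral_mono_ae hI0 (hI1.add hI2) hle).trans ?_
    have hadd := integral_add hI1 hI2
    simp only [Pi.add_apply]
    rw [hadd, integral_const_mul, integral_indicator hmK]
    have : ∫ x in Ω \ K, (1:ℝ) ∂(lam0.restrict Ω) ≤ δ / 2 := by
      rw [setIntegral_const, smul_eq_mul, mul_one, Measure.real,
        Measure.restrict_apply hmK, Set.inter_eq_left.2 Set.sdiff_subset]
      exact ENNReal.toReal_le_of_le_ofReal (by positivity) hKm.le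
    linarith

/-- Key quadratic convergence lemma: if the vector fields
`p_k := |u_k² − 1| ∇u_k` converge weakly (as measures on `Ω`) to `ρ·λ` together with their
total masses, and if the discrepancy `∫_Ω |ε_k|∇u_k|² − |p_k||` vanishes, then
`∫_Ω ε_k ∂_i u_k ∂_j u_k φ → ∫_Ω ρ_i ρ_j φ dλ` for every bounded continuous `φ`. -/
theorem quadratic_gradient_convergence
    (N : ℕ) (Ω : Set (Fin N → ℝ)) (hΩo : IsOpen Ω) (hΩb : Bornology.IsBounded Ω)
    (ε : ℕ → ℝ) (hε : ∀ k, 0 < ε k) (hε0 : Tendsto ε atTop (𝓝 0))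
    (u : ℕ → (Fin N → ℝ) → ℝ) (hu : ∀ k, ContDiff ℝ 1 (u k))
    (lam0 : Measure (Fin N → ℝ)) [IsFiniteMeasure lam0]
    (ρ : (Fin N → ℝ) → (Fin N → ℝ)) (hρm : Measurable ρ)
    (hρ1 : ∀ᵐ x ∂(lam0.restrict Ω), Real.sqrt (∑ i, ρ x i ^ 2) = 1)
    (hweak : ∀ φ : (Fin N → ℝ) → (Fin N → ℝ),
      Continuous φ → HasCompactSupport φ → tsupport φ ⊆ Ω →
      Tendsto
        (fun k => ∫ x in Ω, ∑ i, φ x i * (|u k x ^ 2 - 1| * pdv (u k) i x)) atTop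
        (𝓝 (∫ x in Ω, (∑ i, φ x i * ρ x i) ∂lam0)))
    (hmass : Tendsto
      (fun k => ∫ x in Ω, Real.sqrt (∑ i, (|u k x ^ 2 - 1| * pdv (u k) i x) ^ 2)) atTop
      (𝓝 (lam0 Ω).toReal))
    (hdiscr : Tendsto
      (fun k => ∫ x in Ω,
        |ε k * (∑ i, pdv (u k) i x ^ 2)
          - Real.sqrt (∑ i, (|u k x ^ 2 - 1| * pdv (u k) i x) ^ 2)|) atTop
      (𝓝 0)) :
    ∀ φ : (Fin N → ℝ) → ℝ, ContinuousOn φ Ω → (∃ C : ℝ, ∀ x ∈ Ω, |φ x| ≤ C) →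
      ∀ i j : Fin N,
        Tendsto (fun k => ∫ x in Ω, ε k * pdv (u k) i x * pdv (u k) j x * φ x) atTop
          (𝓝 (∫ x in Ω, ρ x i * ρ x j * φ x ∂lam0)) := by
  intro φ hφc ⟨C, hC⟩ i j
  set M := |C| + 1 with hM
  have hM0 : 0 < M := by positivity
  have hφM : ∀ x ∈ Ω, |φ x| ≤ M := fun x hx => by
    have := hC x hx
    have := le_abs_self C
    linarith
  set L := (lam0 Ω).toReal with hL
  have hL0 : 0 ≤ L := ENNReal.toReal_nonneg
  have hpc : ∀ k l, Continuous (pdv (u k) l) := fun k l =>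
    ((hu k).continuous_fderiv (by simp)).clm_apply continuous_const
  have huc : ∀ k, Continuous (u k) := fun k => (hu k).continuous
  have hint : ∀ f : (Fin N → ℝ) → ℝ, Continuous f → Integrable f (volume.restrict Ω) := by
    intro f hf
    exact (hf.continuousOn.integrableOn_compact hΩb.isCompact_closure).mono_set subset_closure
  have hΩae : ∀ μ : Measure (Fin N → ℝ), ∀ᵐ x ∂(μ.restrict Ω), x ∈ Ω := fun μ =>
    ae_restrict_mem hΩo.measurableSet
  have hφm : ∀ μ : Measure (Fin N → ℝ), AEStronglyMeasurable φ (μ.restrict Ω) := fun μ =>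
    hφc.aestronglyMeasurable hΩo.measurableSet
  have hρ2 : ∀ᵐ x ∂(lam0.restrict Ω), ∑ l, ρ x l ^ 2 = 1 := by
    filter_upwards [hρ1] with x hx
    exact Real.sqrt_eq_one.1 hx
  rw [Metric.tendsto_nhds]
  intro e he
  set η := e / (8 * M * (L + 1)) with hη
  have hη0 : 0 < η := by positivity
  set K := 2 / η + 1 with hK
  have hK0 : 0 < K := by positivity
  obtain ⟨g, hgc, hgs, hgΩ, hg1, hgδ⟩ := aux_approx Ω hΩo lam0 ρ hρm hρ1 (e / (8 * M * K))
    (by positivity)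
  have hgc' : ∀ l, Continuous fun x => g x l := fun l => (continuous_apply l).comp hgc
  let Ψ : (Fin N → ℝ) → (Fin N → ℝ) := fun x l => g x l * (g x i * g x j * φ x)
  have hsupp : Function.support Ψ ⊆ Function.support g := by
    intro x hx hx0
    apply hx
    funext l
    simp [Ψ, hx0]
  have hΨΩ : tsupport Ψ ⊆ Ω := (closure_mono hsupp).trans hgΩ
  have hΨc : Continuous Ψ := by
    refine ContinuousOn.continuous_of_tsupport_subset ?_ hΩo hΨΩ
    refine continuousOn_pi.2 fun l => ?_
    exact (hgc' l).continuousOn.mul (((hgc' i).mul (hgc' j)).continuousOn.mul hφc)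
  have hΨc' : ∀ l, Continuous fun x => Ψ x l := fun l => (continuous_apply l).comp hΨc
  have hB := hweak Ψ hΨc (hgs.mono hsupp) hΨΩ
  have hw := hweak g hgc hgs hgΩ
  set B := ∫ x in Ω, (∑ l, Ψ x l * ρ x l) ∂lam0 with hBdef
  -- integrability on the limit side
  have hρb : ∀ᵐ x ∂(lam0.restrict Ω), ∀ l, |ρ x l| ≤ 1 := by
    filter_upwards [hρ2] with x hx l
    have := (Finset.single_le_sum (f := fun l => (ρ x l) ^ 2) (fun l _ => sq_nonneg _)
      (Finset.mem_univ l)).trans hx.le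
    rwa [sq_le_one_iff_abs_le_one] at this
  have hρm' : ∀ l, Measurable fun x => ρ x l := fun l => (measurable_pi_apply l).comp hρm
  have hρi : ∀ l, Integrable (fun x => ρ x l) (lam0.restrict Ω) := fun l =>
    Integrable.of_bound (hρm' l).aestronglyMeasurable 1 (hρb.mono fun x hx => hx l)
  have hgb : ∀ x l, |g x l| ≤ 1 := fun x l => by
    have := (Finset.single_le_sum (f := fun l => (g x l) ^ 2) (fun l _ => sq_nonneg _)
      (Finset.mem_univ l)).trans (hg1 x)
    rwa [sq_le_one_iff_abs_le_one] at this
  have hgρi : Integrable (fun x => ∑ l, g x l * ρ x l) (lam0.restrict Ω) := by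
    refine integrable_finsetSum _ fun l _ => ?_
    exact (hρi l).bdd_mul (c := 1) (hgc' l).aestronglyMeasurable
      (Eventually.of_forall fun x => hgb x l)
  have hΨρi : Integrable (fun x => ∑ l, Ψ x l * ρ x l) (lam0.restrict Ω) := by
    refine integrable_finsetSum _ fun l _ => ?_
    refine (hρi l).bdd_mul (c := M) (hΨc' l).aestronglyMeasurable ?_
    filter_upwards [hΩae lam0] with x hx
    simp only [Ψ, Real.norm_eq_abs, abs_mul]
    calc |g x l| * (|g x i| * |g x j| * |φ x|) ≤ 1 * (1 * 1 * M) := by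
          gcongr
          exacts [hgb x l, hgb x i, hgb x j, hφM x hx]
      _ = M := by ring
  have hAi : Integrable (fun x => ρ x i * ρ x j * φ x) (lam0.restrict Ω) := by
    refine Integrable.of_bound (C := M)
      (((hρm' i).mul (hρm' j)).aestronglyMeasurable.mul (hφm lam0)) ?_
    filter_upwards [hΩae lam0, hρb] with x hx hb
    simp only [Real.norm_eq_abs, abs_mul]
    calc |ρ x i| * |ρ x j| * |φ x| ≤ 1 * 1 * M := by
          gcongr
          exacts [hb i, hb j, hφM x hx]
      _ = M := by ring
  have hreal : ∫ x in Ω, (1:ℝ) ∂lam0 = L := by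
    rw [setIntegral_const, smul_eq_mul, mul_one, Measure.real]
  have h1sub : ∫ x in Ω, (1 - ∑ l, g x l * ρ x l) ∂lam0 =
      L - ∫ x in Ω, (∑ l, g x l * ρ x l) ∂lam0 := by
    rw [integral_sub (integrable_const _) hgρi, hreal]
  set W := ∫ x in Ω, (∑ l, g x l * ρ x l) ∂lam0 with hW
  have hfin : M * (η * L + K * (L - W)) ≤ e / 4 := by
    rw [h1sub] at hgδ
    have h1 : M * (K * (L - W)) ≤ M * (K * (e / (8 * M * K))) := by gcongr
    have h2 : M * (K * (e / (8 * M * K))) = e / 8 := by field_simp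
    have h3 : M * (η * L) ≤ M * (η * (L + 1)) := by gcongr; linarith
    have h4 : M * (η * (L + 1)) = e / 8 := by rw [hη]; field_simp
    rw [mul_add]; linarith
  have hABlim : |(∫ x in Ω, ρ x i * ρ x j * φ x ∂lam0) - B| ≤ e / 4 := by
    rw [hBdef, ← integral_sub hAi hΨρi]
    have hI : Integrable (fun x => M * (η * 1 + K * (1 - ∑ l, g x l * ρ x l)))
        (lam0.restrict Ω) :=
      ((integrable_const _).add (((integrable_const _).sub hgρi).const_mul K)).const_mul M
    have := norm_integral_le_of_norm_le hI (f := fun x =>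
      ρ x i * ρ x j * φ x - ∑ l, Ψ x l * ρ x l) (by
      filter_upwards [hΩae lam0, hρ2] with x hx hx2
      have key := aux_unit (ρ x) (g x) hx2 (hg1 x) i j η hη0
      have e1 : ρ x i * ρ x j * φ x - ∑ l, Ψ x l * ρ x l =
          φ x * (ρ x i * ρ x j - (∑ l, g x l * ρ x l) * (g x i * g x j)) := by
        have : ∑ l, Ψ x l * ρ x l = (∑ l, g x l * ρ x l) * (g x i * g x j) * φ x := by
          rw [Finset.sum_mul, Finset.sum_mul]
          exact Finset.sum_congr rfl fun l _ => by simp only [Ψ]; ring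
        rw [this]; ring
      rw [e1, Real.norm_eq_abs, abs_mul, mul_one]
      exact mul_le_mul (hφM x hx) key (abs_nonneg _) hM0.le)
    rw [Real.norm_eq_abs] at this
    refine this.trans ?_
    have hI2 : Integrable (fun x => K * (1 - ∑ l, g x l * ρ x l)) (lam0.restrict Ω) :=
      ((integrable_const _).sub hgρi).const_mul K
    rw [integral_const_mul, integral_add (integrable_const _) hI2, integral_const_mul,
      integral_const_mul, h1sub, hreal]
    exact hfin
  -- the approximating side
  have hstep : ∀ k, |(∫ x in Ω, ε k * pdv (u k) i x * pdv (u k) j x * φ x)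
      - ∫ x in Ω, ∑ l, Ψ x l * (|u k x ^ 2 - 1| * pdv (u k) l x)| ≤
      M * ((∫ x in Ω, |ε k * (∑ i, pdv (u k) i x ^ 2)
          - Real.sqrt (∑ i, (|u k x ^ 2 - 1| * pdv (u k) i x) ^ 2)|)
        + η * (∫ x in Ω, Real.sqrt (∑ i, (|u k x ^ 2 - 1| * pdv (u k) i x) ^ 2))
        + K * ((∫ x in Ω, Real.sqrt (∑ i, (|u k x ^ 2 - 1| * pdv (u k) i x) ^ 2))
          - ∫ x in Ω, ∑ l, g x l * (|u k x ^ 2 - 1| * pdv (u k) l x))) := by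
    intro k
    have hpk := hpc k
    have huk := huc k
    have i1 : Integrable (fun x => ε k * pdv (u k) i x * pdv (u k) j x * φ x)
        (volume.restrict Ω) := by
      refine (hint (fun x => ε k * pdv (u k) i x * pdv (u k) j x) (by fun_prop)).mul_bdd
        (c := M) (hφm _) ?_
      filter_upwards [hΩae volume] with x hx using hφM x hx
    have i2 := hint (fun x => ∑ l, Ψ x l * (|u k x ^ 2 - 1| * pdv (u k) l x)) (by fun_prop)
    have i3 := hint (fun x => |ε k * (∑ i, pdv (u k) i x ^ 2)
          - Real.sqrt (∑ i, (|u k x ^ 2 - 1| * pdv (u k) i x) ^ 2)|) (by fun_prop)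
    have i4 := hint (fun x => Real.sqrt (∑ i, (|u k x ^ 2 - 1| * pdv (u k) i x) ^ 2))
      (by fun_prop)
    have i5 := hint (fun x => ∑ l, g x l * (|u k x ^ 2 - 1| * pdv (u k) l x)) (by fun_prop)
    have i6 := hint (fun x => |ε k * (∑ i, pdv (u k) i x ^ 2)
          - Real.sqrt (∑ i, (|u k x ^ 2 - 1| * pdv (u k) i x) ^ 2)|
          + η * Real.sqrt (∑ i, (|u k x ^ 2 - 1| * pdv (u k) i x) ^ 2)) (by fun_prop)
    have i7 := hint (fun x => K * (Real.sqrt (∑ i, (|u k x ^ 2 - 1| * pdv (u k) i x) ^ 2)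
          - ∑ l, g x l * (|u k x ^ 2 - 1| * pdv (u k) l x))) (by fun_prop)
    rw [← integral_sub i1 i2, ← integral_sub i4 i5, ← integral_const_mul, ← integral_const_mul,
      ← integral_add i3 (i4.const_mul η),
      ← integral_add i6 i7,
      ← integral_const_mul, ← Real.norm_eq_abs]
    refine norm_integral_le_of_norm_le
      ((i6.add i7).const_mul M) ?_
    filter_upwards [hΩae volume] with x hx
    have key := aux_point (fun l => pdv (u k) l x) (g x) (hg1 x) (ε k) |u k x ^ 2 - 1|
      (abs_nonneg _) i j η hη0
    have e1 : ε k * pdv (u k) i x * pdv (u k) j x * φ x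
        - ∑ l, Ψ x l * (|u k x ^ 2 - 1| * pdv (u k) l x) =
        φ x * (ε k * pdv (u k) i x * pdv (u k) j x
          - (∑ l, g x l * (|u k x ^ 2 - 1| * pdv (u k) l x)) * (g x i * g x j)) := by
      have : ∑ l, Ψ x l * (|u k x ^ 2 - 1| * pdv (u k) l x) =
          (∑ l, g x l * (|u k x ^ 2 - 1| * pdv (u k) l x)) * (g x i * g x j) * φ x := by
        rw [Finset.sum_mul, Finset.sum_mul]
        exact Finset.sum_congr rfl fun l _ => by simp only [Ψ]; ring
      rw [this]; ring
    rw [e1, Real.norm_eq_abs, abs_mul]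
    exact mul_le_mul (hφM x hx) key (abs_nonneg _) hM0.le
  have hlim := ((hdiscr.add (hmass.const_mul η)).add ((hmass.sub hw).const_mul K)).const_mul M
  rw [zero_add] at hlim
  have ev1 := hlim.eventually_lt_const (show M * (η * L + K * (L - W)) < e / 2 by linarith)
  have ev2 := (Metric.tendsto_nhds.1 hB) (e / 4) (by positivity)
  filter_upwards [ev1, ev2] with k h1 h2
  rw [Real.dist_eq] at h2 ⊢
  have h3 := (hstep k).trans_lt h1
  rw [abs_lt] at h2 h3 ⊢
  rw [abs_le] at hABlim
  constructor <;> linarith [h2.1, h2.2, h3.1, h3.2, hABlim.1, hABlim.2]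

end PaperAC
end

section
/- Let Ω ⊂ ℝ^N be open and bounded, let (ε_k) be positive with ε_k → 0, and let u_k : ℝ^N → ℝ be of class C¹. Let λ be a finite Borel measure on Ω and ρ : Ω → ℝ^N Borel with |ρ| = 1 λ-a.e. Assume: (i) for every bounded continuous φ : Ω → ℝ and all i, j, ∫_Ω ε_k ∂u_k/∂x_i ∂u_k/∂x_j φ dx → ∫_Ω ρ_i ρ_j φ dλ; and (ii) ∫_Ω | ε_k|∇u_k|² − (1 − u_k²)²/ε_k | dx → 0. Let η : ℝ^N → ℝ^N be bounded C¹ with bounded derivatives. Then ∫_Ω [ ( ε_k|∇u_k|²/2 + (1 − u_k²)²/(2ε_k) ) div η − ε_k Σ_{i,j} ∂u_k/∂x_i ∂u_k/∂x_j ∂η^i/∂x_j ] dx → ∫_Ω [ div η − Σ_{i,j} ρ_i ρ_j ∂η^i/∂x_j ] dλ as k → ∞. -/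
open Filter MeasureTheory Topology
open scoped RealInnerProductSpace

namespace PaperAC

theorem pdv_cont {N : ℕ} {f : (Fin N → ℝ) → ℝ} (hf : ContDiff ℝ 1 f) (j : Fin N) :
    Continuous (pdv f j) := by
  have := hf.continuous_fderiv (by norm_num)
  unfold pdv
  exact this.clm_apply continuous_const

theorem intOn_of_cont {N : ℕ} {Ω : Set (Fin N → ℝ)} (hΩb : Bornology.IsBounded Ω)
    {f : (Fin N → ℝ) → ℝ} (hf : Continuous f) : IntegrableOn f Ω :=
  (hf.continuousOn.integrableOn_compact hΩb.isCompact_closure).mono_set subset_closure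

/-- Convergence of the first inner variation of the Allen–Cahn energy:
under the quadratic-convergence hypothesis for `ε_k ∇u_k ⊗ ∇u_k` and vanishing of the
discrepancy, `δE_{ε_k}(u_k, η) → ∫_Ω (div η − ∑_{i,j} ρ_i ρ_j ∂η^i/∂x_j) dλ`. -/
theorem first_inner_variation_allen_cahn_limit
    (N : ℕ) (Ω : Set (Fin N → ℝ)) (hΩo : IsOpen Ω) (hΩb : Bornology.IsBounded Ω)
    (ε : ℕ → ℝ) (hε : ∀ k, 0 < ε k) (hε0 : Tendsto ε atTop (𝓝 0))
    (u : ℕ → (Fin N → ℝ) → ℝ) (hu : ∀ k, ContDiff ℝ 1 (u k))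
    (lam0 : Measure (Fin N → ℝ)) [IsFiniteMeasure lam0]
    (ρ : (Fin N → ℝ) → (Fin N → ℝ)) (hρm : Measurable ρ)
    (hρ1 : ∀ᵐ x ∂(lam0.restrict Ω), Real.sqrt (∑ i, ρ x i ^ 2) = 1)
    (hquad : ∀ φ : (Fin N → ℝ) → ℝ, ContinuousOn φ Ω → (∃ C : ℝ, ∀ x ∈ Ω, |φ x| ≤ C) →
      ∀ i j : Fin N,
        Tendsto (fun k => ∫ x in Ω, ε k * pdv (u k) i x * pdv (u k) j x * φ x) atTop
          (𝓝 (∫ x in Ω, ρ x i * ρ x j * φ x ∂lam0)))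
    (hdiscr : Tendsto
      (fun k => ∫ x in Ω,
        |ε k * (∑ i, pdv (u k) i x ^ 2) - (1 - u k x ^ 2) ^ 2 / ε k|) atTop (𝓝 0))
    (η : (Fin N → ℝ) → (Fin N → ℝ))
    (hη : ContDiff ℝ 1 η) (hηb : BddUpTo 1 η) :
    Tendsto
      (fun k => ∫ x in Ω,
        ((ε k * (∑ i, pdv (u k) i x ^ 2) / 2 + (1 - u k x ^ 2) ^ 2 / (2 * ε k))
            * (∑ i, pdv (fun z => η z i) i x)
          - ε k * ∑ i, ∑ j, pdv (u k) i x * pdv (u k) j x * pdv (fun z => η z i) j x))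
      atTop
      (𝓝 (∫ x in Ω,
        ((∑ i, pdv (fun z => η z i) i x)
          - ∑ i, ∑ j, ρ x i * ρ x j * pdv (fun z => η z i) j x) ∂lam0)) := by
  have hηi : ∀ i, ContDiff ℝ 1 (fun z => η z i) := fun i => contDiff_pi.1 hη i
  have hac : ∀ i j, Continuous (pdv (fun z => η z i) j) := fun i j => pdv_cont (hηi i) j
  obtain ⟨C, hC⟩ := hηb 1 le_rfl
  have hab : ∀ i j x, |pdv (fun z => η z i) j x| ≤ C := by
    intro i j x
    have h1 : fderiv ℝ (fun z => η z i) x (Pi.single j 1) = fderiv ℝ η x (Pi.single j 1) i := by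
      have := (hη.differentiable (by norm_num) x).hasFDerivAt
      rw [(hasFDerivAt_pi'.1 this i).fderiv]
      rfl
    have h2 := hC x
    rw [norm_iteratedFDeriv_one] at h2
    unfold pdv
    rw [h1, ← Real.norm_eq_abs]
    refine (norm_le_pi_norm _ i).trans (((fderiv ℝ η x).le_opNorm _).trans ?_)
    have h3 : ‖(Pi.single j 1 : Fin N → ℝ)‖ = 1 := by simp [Pi.norm_single]
    rw [h3, mul_one]
    exact h2
  generalize ha : (fun (i j : Fin N) (x : Fin N → ℝ) => pdv (fun z => η z i) j x) = a
  have ha' : ∀ i j x, pdv (fun z => η z i) j x = a i j x := by intro i j x; rw [← ha]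
  have hac' : ∀ i j, Continuous (a i j) := by intro i j; rw [← ha]; exact hac i j
  simp only [ha'] at hab ⊢
  have hdc : Continuous (fun x => ∑ i, a i i x) := continuous_finsetSum _ fun i _ => hac' i i
  have hdb : ∀ x, |∑ i, a i i x| ≤ ∑ _i : Fin N, C := fun x =>
    (Finset.abs_sum_le_sum_abs _ _).trans (Finset.sum_le_sum fun i _ => hab i i x)
  generalize hB : (∑ _i : Fin N, C) = B at hdb
  generalize hd : (fun x => ∑ i, a i i x) = d at hdc
  have hd' : ∀ x, ∑ i, a i i x = d x := by intro x; rw [← hd]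
  simp only [hd'] at hdb ⊢
  have hpc : ∀ k i, Continuous (pdv (u k) i) := fun k i => pdv_cont (hu k) i
  have huc : ∀ k, Continuous (u k) := fun k => (hu k).continuous
  -- the three limits
  have T1 : Tendsto (fun k => ∑ i, ∫ x in Ω, ε k * pdv (u k) i x * pdv (u k) i x * d x) atTop
      (𝓝 (∑ i, ∫ x in Ω, ρ x i * ρ x i * d x ∂lam0)) :=
    tendsto_finsetSum _ fun i _ => hquad d hdc.continuousOn ⟨B, fun x _ => hdb x⟩ i i
  have T2 : Tendsto (fun k => ∑ i, ∑ j,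
      ∫ x in Ω, ε k * pdv (u k) i x * pdv (u k) j x * a i j x) atTop
      (𝓝 (∑ i, ∑ j, ∫ x in Ω, ρ x i * ρ x j * a i j x ∂lam0)) :=
    tendsto_finsetSum _ fun i _ => tendsto_finsetSum _ fun j _ =>
      hquad (a i j) (hac' i j).continuousOn ⟨C, fun x _ => hab i j x⟩ i j
  have hDc : ∀ k, Continuous (fun x =>
      ε k * (∑ i, pdv (u k) i x ^ 2) - (1 - u k x ^ 2) ^ 2 / ε k) := fun k =>
    (continuous_const.mul (continuous_finsetSum _ fun i _ => (hpc k i).pow 2)).sub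
      (((continuous_const.sub ((huc k).pow 2)).pow 2).div_const _)
  have T3 : Tendsto (fun k => ∫ x in Ω,
      (ε k * (∑ i, pdv (u k) i x ^ 2) - (1 - u k x ^ 2) ^ 2 / ε k) * d x) atTop (𝓝 0) := by
    have hz := hdiscr.const_mul B
    rw [mul_zero] at hz
    refine squeeze_zero_norm (fun k => ?_) hz
    rw [← integral_const_mul]
    refine norm_integral_le_of_norm_le
      ((intOn_of_cont hΩb (hDc k).abs).const_mul B) (ae_of_all _ fun x => ?_)
    rw [Real.norm_eq_abs, abs_mul, mul_comm]
    exact mul_le_mul_of_nonneg_right (hdb x) (abs_nonneg _)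
  have hT := (T1.sub T2).sub (T3.const_mul (1 / 2))
  have hρb : ∀ᵐ x ∂(lam0.restrict Ω), ∑ i, ρ x i ^ 2 = 1 := by
    filter_upwards [hρ1] with x hx
    exact Real.sqrt_eq_one.1 hx
  have hρi : ∀ i, Measurable fun x => ρ x i := fun i => (measurable_pi_apply i).comp hρm
  have hint : ∀ (f : (Fin N → ℝ) → ℝ) (K : ℝ), Continuous f → (∀ x, |f x| ≤ K) → ∀ i j,
      Integrable (fun x => ρ x i * ρ x j * f x) (lam0.restrict Ω) := by
    intro f K hf hK i j
    refine Integrable.of_bound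
      (((hρi i).mul (hρi j)).mul hf.measurable).aestronglyMeasurable K ?_
    filter_upwards [hρb] with x hx
    have hb : ∀ i, |ρ x i| ≤ 1 := fun i => by
      have : ρ x i ^ 2 ≤ 1 := hx ▸
        Finset.single_le_sum (f := fun i => ρ x i ^ 2) (fun i _ => sq_nonneg _) (Finset.mem_univ i)
      exact (sq_le_one_iff_abs_le_one _).1 this
    rw [Real.norm_eq_abs, abs_mul, abs_mul]
    have h1 : |ρ x i| * |ρ x j| ≤ 1 := mul_le_one₀ (hb i) (abs_nonneg _) (hb j)
    calc _ ≤ 1 * |f x| := mul_le_mul_of_nonneg_right h1 (abs_nonneg _)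
      _ ≤ K := by rw [one_mul]; exact hK x
  have hint1 : ∀ i, Integrable (fun x => ρ x i * ρ x i * d x) (lam0.restrict Ω) :=
    fun i => hint d B hdc hdb i i
  have hint2 : ∀ i j, Integrable (fun x => ρ x i * ρ x j * a i j x) (lam0.restrict Ω) :=
    fun i j => hint (a i j) C (hac' i j) (hab i j) i j
  have hI1 : ∀ k i, Integrable (fun x => ε k * pdv (u k) i x * pdv (u k) i x * d x)
      (volume.restrict Ω) := fun k i =>
    intOn_of_cont hΩb (((continuous_const.mul (hpc k i)).mul (hpc k i)).mul hdc)
  have hI2 : ∀ k i j, Integrable (fun x => ε k * pdv (u k) i x * pdv (u k) j x * a i j x)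
      (volume.restrict Ω) := fun k i j =>
    intOn_of_cont hΩb (((continuous_const.mul (hpc k i)).mul (hpc k j)).mul (hac' i j))
  have hI3 : ∀ k, Integrable (fun x =>
      (ε k * (∑ i, pdv (u k) i x ^ 2) - (1 - u k x ^ 2) ^ 2 / ε k) * d x)
      (volume.restrict Ω) := fun k => intOn_of_cont hΩb ((hDc k).mul hdc)
  convert hT using 1
  · funext k
    have e2 : ∑ i, ∑ j, ∫ x in Ω, ε k * pdv (u k) i x * pdv (u k) j x * a i j x
        = ∫ x in Ω, ∑ i, ∑ j, ε k * pdv (u k) i x * pdv (u k) j x * a i j x := by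
      rw [integral_finsetSum _ fun i _ => integrable_finsetSum _ fun j _ => hI2 k i j]
      exact Finset.sum_congr rfl fun i _ => (integral_finsetSum _ fun j _ => hI2 k i j).symm
    have hI12 : Integrable (fun x => ∑ i, ε k * pdv (u k) i x * pdv (u k) i x * d x
        - ∑ i, ∑ j, ε k * pdv (u k) i x * pdv (u k) j x * a i j x) (volume.restrict Ω) :=
      (integrable_finsetSum _ fun i _ => hI1 k i).sub
        (integrable_finsetSum _ fun i _ => integrable_finsetSum _ fun j _ => hI2 k i j)
    rw [e2, ← integral_finsetSum _ fun i _ => hI1 k i, ← integral_const_mul,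
      ← integral_sub (integrable_finsetSum _ fun i _ => hI1 k i)
        (integrable_finsetSum _ fun i _ => integrable_finsetSum _ fun j _ => hI2 k i j),
      ← integral_sub hI12 ((hI3 k).const_mul _)]
    refine integral_congr_ae (ae_of_all _ fun x => ?_)
    have s1 : ∑ i, ε k * pdv (u k) i x * pdv (u k) i x * d x
        = ε k * (∑ i, pdv (u k) i x ^ 2) * d x := by
      rw [Finset.mul_sum, Finset.sum_mul]
      exact Finset.sum_congr rfl fun i _ => by ring
    have s2 : ∑ i, ∑ j, ε k * pdv (u k) i x * pdv (u k) j x * a i j x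
        = ε k * ∑ i, ∑ j, pdv (u k) i x * pdv (u k) j x * a i j x := by
      simp only [Finset.mul_sum, mul_assoc]
    have := (hε k).ne'
    simp only [s1, s2]
    field_simp
    ring
  · congr 1
    have e2 : ∑ i, ∑ j, ∫ x in Ω, ρ x i * ρ x j * a i j x ∂lam0
        = ∫ x in Ω, ∑ i, ∑ j, ρ x i * ρ x j * a i j x ∂lam0 := by
      rw [integral_finsetSum _ fun i _ => integrable_finsetSum _ fun j _ => hint2 i j]
      exact Finset.sum_congr rfl fun i _ => (integral_finsetSum _ fun j _ => hint2 i j).symm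
    rw [e2, ← integral_finsetSum _ fun i _ => hint1 i, mul_zero, sub_zero,
      ← integral_sub (integrable_finsetSum _ fun i _ => hint1 i)
        (integrable_finsetSum _ fun i _ => integrable_finsetSum _ fun j _ => hint2 i j)]
    refine integral_congr_ae ?_
    filter_upwards [hρb] with x hx
    have s1 : ∑ i, ρ x i * ρ x i * d x = d x := by
      rw [← Finset.sum_mul]
      simp only [← pow_two, hx, one_mul]
    rw [s1]


end PaperAC
end

section
/- Let Ω ⊂ ℝ^N be open and bounded, let G : Ω × Ω → ℝ be integrable (G ∈ L¹(Ω×Ω)) and symmetric, G(x, y) = G(y, x). Let u : ℝ^N → ℝ be bounded and of class C³ with bounded derivatives, and let η, ζ : ℝ^N → ℝ^N be bounded and of class C³ with bounded derivatives. Define Φ_t(x) := x + t·η(x) + (t²/2)·ζ(x), let τ > 0 be such that Φ_t is a bijection of ℝ^N for |t| < τ, and set u_t(y) := u(Φ_t⁻¹(y)). Define B(t) := ∫_Ω ∫_Ω G(x, y) u_t(x) u_t(y) dx dy. Then B is differentiable at t = 0 with B'(0) = −2 ∫_Ω ∫_Ω G(x, y) u(y) (∇u(x)·η(x)) dx dy.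 -/
open Filter MeasureTheory Topology
open scoped RealInnerProductSpace

namespace PaperAC

lemma nonlocal_aux {α : Type*} [MeasurableSpace α] (μ : Measure α) [SFinite μ]
    (G : α → α → ℝ)
    (hG : Integrable (fun p : α × α => G p.1 p.2) (μ.prod μ))
    (hGsym : ∀ x y, G x y = G y x)
    (v : ℝ → α → ℝ) (d : α → ℝ) (s : Set ℝ) (hs : s ∈ 𝓝 (0 : ℝ)) (C L : ℝ)
    (hv : ∀ t ∈ s, Measurable (v t)) (hvC : ∀ t x, |v t x| ≤ C)
    (hlip : ∀ t ∈ s, ∀ x, |v t x - v 0 x| ≤ L * |t|)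
    (hder : ∀ x, HasDerivAt (fun t => v t x) (d x) 0)
    (hd : Measurable d) (C' : ℝ) (hdC : ∀ x, |d x| ≤ C') :
    HasDerivAt (fun t : ℝ => ∫ x, ∫ y, G x y * (v t x * v t y) ∂μ ∂μ)
      (2 * ∫ x, ∫ y, G x y * (v 0 y * d x) ∂μ ∂μ) 0 := by
  have h0 : (0 : ℝ) ∈ s := mem_of_mem_nhds hs
  have hint : ∀ (f g : α → ℝ) (a b : ℝ), Measurable f → Measurable g → (∀ x, |f x| ≤ a) →
      (∀ x, |g x| ≤ b) →
      Integrable (fun p : α × α => G p.1 p.2 * (f p.1 * g p.2)) (μ.prod μ) := by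
    intro f g a b hf hg ha hb
    refine hG.mul_bdd (c := a * b) ?_ ?_
    · exact ((hf.comp measurable_fst).mul (hg.comp measurable_snd)).aestronglyMeasurable
    · refine Eventually.of_forall fun p => ?_
      rw [Real.norm_eq_abs, abs_mul]
      exact mul_le_mul (ha _) (hb _) (abs_nonneg _) ((abs_nonneg _).trans (ha p.1))
  have hFi : ∀ t ∈ s, Integrable (fun p : α × α => G p.1 p.2 * (v t p.1 * v t p.2)) (μ.prod μ) :=
    fun t ht => hint _ _ C C (hv t ht) (hv t ht) (hvC t) (hvC t)
  have i1 := hint d (v 0) C' C hd (hv 0 h0) hdC (hvC 0)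
  have i2 := hint (v 0) d C C' (hv 0 h0) hd (hvC 0) hdC
  have hsum := i1.add i2
  have key := hasFDerivAt_integral_of_dominated_loc_of_lip' (𝕜 := ℝ) (μ := μ.prod μ)
    (F := fun (t : ℝ) (p : α × α) => G p.1 p.2 * (v t p.1 * v t p.2)) (x₀ := (0 : ℝ)) (s := s)
    (F' := fun p => (G p.1 p.2 * (d p.1 * v 0 p.2) + G p.1 p.2 * (v 0 p.1 * d p.2)) •
      (1 : ℝ →L[ℝ] ℝ))
    (bound := fun p => ‖G p.1 p.2‖ * (2 * C * L)) hs
    (fun t ht => (hFi t ht).aestronglyMeasurable) (hFi 0 h0)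
    (hsum.aestronglyMeasurable.smul_const _)
    (by
      refine Eventually.of_forall fun p t ht => ?_
      have e : G p.1 p.2 * (v t p.1 * v t p.2) - G p.1 p.2 * (v 0 p.1 * v 0 p.2)
        = G p.1 p.2 * ((v t p.1 - v 0 p.1) * v t p.2 + v 0 p.1 * (v t p.2 - v 0 p.2)) := by ring
      rw [e, norm_mul, mul_assoc, sub_zero]
      refine mul_le_mul_of_nonneg_left ?_ (norm_nonneg _)
      rw [Real.norm_eq_abs, Real.norm_eq_abs]
      refine (abs_add_le _ _).trans ?_
      rw [abs_mul, abs_mul]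
      have a1 := hlip t ht p.1
      have a2 := hlip t ht p.2
      have b1 := mul_le_mul a1 (hvC t p.2) (abs_nonneg _) ((abs_nonneg _).trans a1)
      have b2 := mul_le_mul (hvC 0 p.1) a2 (abs_nonneg _) ((abs_nonneg _).trans (hvC 0 p.1))
      linarith)
    (hG.norm.mul_const _)
    (by
      refine Eventually.of_forall fun p => ?_
      have := ((hder p.1).mul (hder p.2)).const_mul (G p.1 p.2)
      rw [hasDerivAt_iff_hasFDerivAt] at this
      refine this.congr_fderiv ?_
      ext
      simp
      ring)
  have k2 := key.2.hasDerivAt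
  rw [integral_smul_const] at k2
  have hswap : ∫ p, G p.1 p.2 * (v 0 p.1 * d p.2) ∂(μ.prod μ)
      = ∫ p, G p.1 p.2 * (d p.1 * v 0 p.2) ∂(μ.prod μ) := by
    rw [← integral_prod_swap]
    refine integral_congr_ae (Eventually.of_forall fun p => ?_)
    simp only [Prod.fst_swap, Prod.snd_swap]
    rw [hGsym]; ring
  rw [integral_add i1 i2, hswap] at k2
  have hfin : ∫ x, ∫ y, G x y * (v 0 y * d x) ∂μ ∂μ
      = ∫ p, G p.1 p.2 * (d p.1 * v 0 p.2) ∂(μ.prod μ) := by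
    rw [integral_prod _ i1]
    simp only [mul_comm (d _)]
  rw [hfin, two_mul]
  simp only [ContinuousLinearMap.smul_apply, ContinuousLinearMap.one_apply, smul_eq_mul,
    mul_one] at k2
  refine k2.congr_of_eventuallyEq ?_
  filter_upwards [hs] with t ht
  rw [integral_prod _ (hFi t ht)]

lemma bdd_zero_one {N : ℕ} {E : Type*} [NormedAddCommGroup E] [NormedSpace ℝ E]
    {f : (Fin N → ℝ) → E} (h : BddUpTo 3 f) :
    ∃ C : ℝ, 0 ≤ C ∧ (∀ x, ‖f x‖ ≤ C) ∧ ∀ x, ‖fderiv ℝ f x‖ ≤ C := by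
  obtain ⟨a, ha⟩ := h 0 (by norm_num)
  obtain ⟨b, hb⟩ := h 1 (by norm_num)
  simp only [norm_iteratedFDeriv_zero, norm_iteratedFDeriv_one] at ha hb
  exact ⟨max a b, ((norm_nonneg _).trans (ha 0)).trans (le_max_left _ _),
    fun x => (ha x).trans (le_max_left _ _), fun x => (hb x).trans (le_max_right _ _)⟩

lemma sum_pdv {N : ℕ} (u : (Fin N → ℝ) → ℝ) (x w : Fin N → ℝ) :
    ∑ i, pdv u i x * w i = fderiv ℝ u x w := by
  conv_rhs => rw [pi_eq_sum_univ' w]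
  rw [map_sum]
  refine Finset.sum_congr rfl fun i _ => ?_
  rw [map_smul, smul_eq_mul, mul_comm]
  congr 2

/-- First inner variation of the nonlocal energy
`B(w) := ∫_Ω∫_Ω G(x,y) w(x) w(y)`: with `u_t := u ∘ Φ_t⁻¹`,
`B(t) := ∫_Ω∫_Ω G(x,y) u_t(x) u_t(y)` is differentiable at `t = 0` with
`B'(0) = −2 ∫_Ω∫_Ω G(x,y) u(y) (∇u(x)·η(x))`. -/
theorem first_inner_variation_nonlocal
    (N : ℕ) (Ω : Set (Fin N → ℝ)) (hΩo : IsOpen Ω) (hΩb : Bornology.IsBounded Ω)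
    (G : (Fin N → ℝ) → (Fin N → ℝ) → ℝ)
    (hGint : Integrable (fun p : (Fin N → ℝ) × (Fin N → ℝ) => G p.1 p.2)
      ((volume.restrict Ω).prod (volume.restrict Ω)))
    (hGsym : ∀ x y, G x y = G y x)
    (u : (Fin N → ℝ) → ℝ) (hu : ContDiff ℝ 3 u) (hub : BddUpTo 3 u)
    (η ζ : (Fin N → ℝ) → (Fin N → ℝ))
    (hη : ContDiff ℝ 3 η) (hηb : BddUpTo 3 η)
    (hζ : ContDiff ℝ 3 ζ) (hζb : BddUpTo 3 ζ)
    (Φ : ℝ → (Fin N → ℝ) → (Fin N → ℝ))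
    (hΦ : ∀ t x, Φ t x = x + t • η x + (t ^ 2 / 2) • ζ x)
    (τ : ℝ) (hτ : 0 < τ)
    (hbij : ∀ t : ℝ, |t| < τ → Function.Bijective (Φ t)) :
    HasDerivAt
      (fun t : ℝ => ∫ x in Ω, ∫ y in Ω,
        G x y * (u (Function.invFun (Φ t) x) * u (Function.invFun (Φ t) y)))
      (-2 * ∫ x in Ω, ∫ y in Ω,
        G x y * (u y * (∑ i, pdv u i x * η x i))) 0 := by
  obtain ⟨A, hA0, hA, hA'⟩ := bdd_zero_one hub
  obtain ⟨K, hK0, hK, -⟩ := bdd_zero_one hηb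
  obtain ⟨Z, hZ0, hZ, -⟩ := bdd_zero_one hζb
  set P : ℝ → (Fin N → ℝ) → (Fin N → ℝ) := fun t => Function.invFun (Φ t) with hP
  have hinv : ∀ t : ℝ, |t| < τ → ∀ x, Φ t (P t x) = x := fun t ht x =>
    Function.rightInverse_invFun (hbij t ht).2 x
  have hdiff : ∀ t : ℝ, |t| < τ → ∀ x, P t x - x = t • (-(η (P t x) + (t / 2) • ζ (P t x))) := by
    intro t ht x
    have h := hinv t ht x
    rw [hΦ] at h
    ext i
    have hi := congrFun h i
    simp only [Pi.add_apply, Pi.smul_apply, Pi.sub_apply, Pi.neg_apply, smul_eq_mul] at hi ⊢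
    linear_combination hi
  have hP0 : ∀ x, P 0 x = x := fun x => by
    have := hdiff 0 (by simpa using hτ) x
    rwa [zero_smul, sub_eq_zero] at this
  set s : Set ℝ := Metric.ball 0 (min τ 1) with hsdef
  have hs : s ∈ 𝓝 (0 : ℝ) := Metric.ball_mem_nhds _ (lt_min hτ one_pos)
  have hsτ : ∀ t ∈ s, |t| < τ := fun t ht => by
    rw [hsdef, mem_ball_zero_iff] at ht
    exact ht.trans_le (min_le_left _ _)
  have hs1 : ∀ t ∈ s, |t| < 1 := fun t ht => by
    rw [hsdef, mem_ball_zero_iff] at ht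
    exact ht.trans_le (min_le_right _ _)
  have hPlip : ∀ t ∈ s, ∀ x, ‖P t x - x‖ ≤ (K + Z) * |t| := by
    intro t ht x
    rw [hdiff t (hsτ t ht) x, norm_smul, Real.norm_eq_abs, mul_comm, norm_neg]
    refine mul_le_mul_of_nonneg_right ?_ (abs_nonneg _)
    refine (norm_add_le _ _).trans (add_le_add (hK _) ?_)
    rw [norm_smul, Real.norm_eq_abs, abs_div, abs_two]
    have h1 := hs1 t ht
    have h2 := hZ (P t x)
    have h3 := norm_nonneg (ζ (P t x))
    have h4 := abs_nonneg t
    nlinarith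
  have hPtend : ∀ x, Tendsto (fun t => P t x) (𝓝 0) (𝓝 x) := by
    intro x
    rw [tendsto_iff_norm_sub_tendsto_zero]
    refine squeeze_zero' (g := fun t : ℝ => (K + Z) * |t|)
      (Eventually.of_forall fun t => norm_nonneg _) ?_ ?_
    · filter_upwards [hs] with t ht using hPlip t ht x
    · have : Continuous fun t : ℝ => (K + Z) * |t| := by fun_prop
      simpa using this.tendsto 0
  have hPder : ∀ x, HasDerivAt (fun t => P t x) (-η x) 0 := by
    intro x
    rw [hasDerivAt_iff_tendsto_slope]
    have h1 : Tendsto (fun t : ℝ => -(η (P t x) + (t / 2) • ζ (P t x))) (𝓝 0)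
        (𝓝 (-(η x + ((0 : ℝ) / 2) • ζ x))) := by
      refine Tendsto.neg (Tendsto.add ?_ (Tendsto.smul ?_ ?_))
      · exact (hη.continuous.tendsto x).comp (hPtend x)
      · exact tendsto_id.div_const 2
      · exact (hζ.continuous.tendsto x).comp (hPtend x)
    rw [zero_div, zero_smul, add_zero] at h1
    refine (h1.mono_left nhdsWithin_le_nhds).congr' ?_
    filter_upwards [nhdsWithin_le_nhds hs, self_mem_nhdsWithin] with t ht ht0
    rw [slope_def_module, hP0, hdiff t (hsτ t ht) x, sub_zero, smul_smul, inv_mul_cancel₀ ht0,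
      one_smul]
  have hPmeas : ∀ t ∈ s, Measurable (P t) := by
    intro t ht
    have hb := hbij t (hsτ t ht)
    have hc : Continuous (Φ t) := by
      have : Φ t = fun x => x + t • η x + (t ^ 2 / 2) • ζ x := funext (hΦ t)
      rw [this]
      have := hη.continuous
      have := hζ.continuous
      fun_prop
    have he := hc.measurableEmbedding hb.1
    intro S hS
    have : P t ⁻¹' S = Φ t '' S := by
      ext y
      constructor
      · intro hy
        exact ⟨P t y, hy, hinv t (hsτ t ht) y⟩
      · rintro ⟨z, hz, rfl⟩
        change P t (Φ t z) ∈ S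
        rwa [show P t (Φ t z) = z from Function.leftInverse_invFun hb.1 z]
    rw [this]
    exact he.measurableSet_image.2 hS
  have hud : Differentiable ℝ u := hu.differentiable (by norm_num)
  have hudc : Continuous (fderiv ℝ u) := hu.continuous_fderiv (by norm_num)
  have main := nonlocal_aux (volume.restrict Ω) G hGint hGsym (fun t x => u (P t x))
    (fun x => -fderiv ℝ u x (η x)) s hs A (A * (K + Z))
    (fun t ht => hu.continuous.measurable.comp (hPmeas t ht)) (fun t x => hA _)
    (fun t ht x => by
      rw [hP0]
      have h := Convex.norm_image_sub_le_of_norm_fderiv_le (𝕜 := ℝ) (f := u) (C := A)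
        (s := Set.univ) (x := x) (y := P t x)
        (fun z _ => hud z) (fun z _ => hA' z) convex_univ trivial trivial
      rw [mul_assoc]
      exact h.trans (mul_le_mul_of_nonneg_left (hPlip t ht x) hA0))
    (fun x => by
      have h := (hud (P 0 x)).hasFDerivAt.comp_hasDerivAt (0 : ℝ) (hPder x)
      rw [hP0, map_neg] at h
      exact h)
    (hudc.clm_apply hη.continuous).neg.measurable (A * K)
    (fun x => by
      rw [abs_neg]
      refine ((fderiv ℝ u x).le_opNorm (η x)).trans ?_
      exact mul_le_mul (hA' x) (hK x) (norm_nonneg _) hA0)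
  convert main using 1
  simp only [sum_pdv, hP0, mul_neg, integral_neg]
  ring


end PaperAC
end

section
/- Let Ω ⊂ ℝ^N be a measurable set of finite Lebesgue measure and define Φ(a) := ∫_0^a |s² − 1| ds for a ∈ ℝ. Let w_k : Ω → ℝ be measurable functions with ∫_Ω (w_k² − 1)² dx < ∞ for each k, and let w : Ω → ℝ be measurable with |w(x)| = 1 for a.e. x. Assume w_k → w in L¹(Ω) and ∫_{{x ∈ Ω : |w_k(x)| > 1}} (w_k(x)² − 1)² dx → 0 as k → ∞. Then Φ∘w_k → Φ∘w in L¹(Ω), i.e. ∫_Ω |Φ(w_k(x)) − Φ(w(x))| dx → 0. -/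
open Filter MeasureTheory Topology
open scoped RealInnerProductSpace

namespace PaperAC

theorem PhiAC_sub_le (C x y : ℝ) (h : ∀ s ∈ Set.uIcc y x, |s ^ 2 - 1| ≤ C) :
    |PhiAC x - PhiAC y| ≤ C * |x - y| := by
  have hc : Continuous fun s : ℝ => |s ^ 2 - 1| := by fun_prop
  unfold PhiAC
  rw [intervalIntegral.integral_interval_sub_left (hc.intervalIntegrable _ _)
    (hc.intervalIntegrable _ _)]
  have := intervalIntegral.norm_integral_le_of_norm_le_const (a := y) (b := x) (C := C)
    (f := fun s : ℝ => |s ^ 2 - 1|) (fun s hs => by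
      simpa using h s (Set.uIoc_subset_uIcc hs))
  simpa using this

theorem PhiAC_lip (x y : ℝ) (hx : |x| ≤ 1) (hy : |y| ≤ 1) :
    |PhiAC x - PhiAC y| ≤ |x - y| := by
  rw [← one_mul |x - y|]
  apply PhiAC_sub_le
  intro s hs
  rw [abs_le] at hx hy
  have hs' : s ∈ Set.Icc (-1 : ℝ) 1 := Set.uIcc_subset_Icc hy hx hs
  rw [abs_le]
  constructor <;> nlinarith [hs'.1, hs'.2]

theorem PhiAC_pt (a b : ℝ) (hb : |b| = 1) :
    |PhiAC a - PhiAC b| ≤ |a - b| + {a : ℝ | 1 < |a|}.indicator (fun a => (a ^ 2 - 1) ^ 2) a := by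
  by_cases ha : 1 < |a|
  · rw [Set.indicator_of_mem (by exact ha)]
    have hb' := abs_le.1 hb.le
    rcases lt_abs.1 ha with h | h
    · have h1 := PhiAC_lip 1 b (by simp) hb.le
      have h2 := PhiAC_sub_le (a ^ 2 - 1) a 1 (by
        intro s hs
        rw [Set.uIcc_of_le h.le] at hs
        rw [abs_le]; constructor <;> nlinarith [hs.1, hs.2])
      have h3 := abs_sub_le (PhiAC a) (PhiAC 1) (PhiAC b)
      rw [abs_of_nonneg (by linarith : 0 ≤ a - 1)] at h2
      rw [abs_of_nonneg (by linarith : 0 ≤ 1 - b)] at h1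
      rw [abs_of_nonneg (by linarith : 0 ≤ a - b)]
      have : (a ^ 2 - 1) * (a - 1) ≤ (a ^ 2 - 1) * (a ^ 2 - 1) :=
        mul_le_mul_of_nonneg_left (by nlinarith) (by nlinarith)
      nlinarith
    · have h1 := PhiAC_lip (-1) b (by simp) hb.le
      have h2 := PhiAC_sub_le (a ^ 2 - 1) a (-1) (by
        intro s hs
        rw [Set.uIcc_of_ge (by linarith)] at hs
        rw [abs_le]; constructor <;> nlinarith [hs.1, hs.2])
      have h3 := abs_sub_le (PhiAC a) (PhiAC (-1)) (PhiAC b)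
      rw [abs_of_nonpos (by linarith : a - (-1) ≤ 0)] at h2
      rw [abs_of_nonpos (by linarith : -1 - b ≤ 0)] at h1
      rw [abs_of_nonpos (by linarith : a - b ≤ 0)]
      have : (a ^ 2 - 1) * (-(a - (-1))) ≤ (a ^ 2 - 1) * (a ^ 2 - 1) :=
        mul_le_mul_of_nonneg_left (by nlinarith) (by nlinarith)
      nlinarith
  · rw [Set.indicator_of_notMem (by exact ha), add_zero]
    exact PhiAC_lip a b (not_lt.1 ha) hb.le

/-- Truncation lemma: if `w_k → w` in `L¹(Ω)`, `|w| = 1` a.e., and the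
energy excess `∫_{|w_k|>1} (w_k² − 1)²` vanishes, then `Φ∘w_k → Φ∘w` in `L¹(Ω)`, where
`Φ(a) := ∫_0^a |s² − 1| ds`. -/
theorem truncation_L1_convergence
    (N : ℕ) (Ω : Set (Fin N → ℝ)) (hΩm : MeasurableSet Ω) (hΩf : volume Ω < ⊤)
    (w : ℕ → (Fin N → ℝ) → ℝ) (hwm : ∀ k, Measurable (w k))
    (hw4 : ∀ k, IntegrableOn (fun x => (w k x ^ 2 - 1) ^ 2) Ω)
    (w0 : (Fin N → ℝ) → ℝ) (hw0m : Measurable w0)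
    (hw01 : ∀ᵐ x ∂(volume.restrict Ω), |w0 x| = 1)
    (hwint : ∀ k, IntegrableOn (w k) Ω)
    (hL1 : Tendsto (fun k => ∫ x in Ω, |w k x - w0 x|) atTop (𝓝 0))
    (htrunc : Tendsto
      (fun k => ∫ x in Ω ∩ {x | 1 < |w k x|}, (w k x ^ 2 - 1) ^ 2) atTop (𝓝 0)) :
    Tendsto (fun k => ∫ x in Ω, |PhiAC (w k x) - PhiAC (w0 x)|) atTop (𝓝 0) := by
  have : IsFiniteMeasure (volume.restrict Ω) := ⟨by simpa using hΩf⟩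
  have hw0i : IntegrableOn w0 Ω := by
    refine Integrable.of_bound hw0m.aestronglyMeasurable 1 ?_
    filter_upwards [hw01] with x hx
    exact hx.le
  have hsm : ∀ k, MeasurableSet {x | 1 < |w k x|} := fun k =>
    measurableSet_lt measurable_const (by simpa using (hwm k).norm)
  have hsum := hL1.add htrunc
  rw [add_zero] at hsum
  refine squeeze_zero (fun k => integral_nonneg fun x => abs_nonneg _) (fun k => ?_) hsum
  have hd : Integrable (fun x => |w k x - w0 x|) (volume.restrict Ω) :=
    ((hwint k).sub hw0i).abs
  have hi : Integrable ({x | 1 < |w k x|}.indicator fun x => (w k x ^ 2 - 1) ^ 2)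
      (volume.restrict Ω) := (hw4 k).integrable.indicator (hsm k)
  rw [Set.inter_comm, ← Measure.restrict_restrict (hsm k), ← integral_indicator (hsm k),
    ← integral_add hd hi]
  refine integral_mono_of_nonneg (Eventually.of_forall fun x => abs_nonneg _) (hd.add hi) ?_
  filter_upwards [hw01] with x hx
  exact PhiAC_pt (w k x) (w0 x) hx

end PaperAC
end
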